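/- Suppose M is consistent, contractive with contraction rate 0 < a < 1, uniformly continuous with b < ∞, and has a dominating Markov chain with c < ∞. Then P(M) is nonempty, i.e. M possesses an invariant Borel probability measure. -/

import Mathlib

open MeasureTheory Filter Topology
open scoped ENNReal NNReal Classical

noncomputable section

/-- A countable Markov system `(K_{i(e)}, w_e, p_e)_{e ∈ E}` on a metric space `K`:
a partition `(K_j)_{j ∈ N}` of `K` into nonempty Borel sets, source and target maps
`i, t : E → N` (`i` surjective), and for each `e ∈ E` Borel maps `w_e` and probability
functions `p_e` (extended by zero outside `K_{i(e)}`) with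
`∑_{e, i(e)=j} p_e(y) = 1` for `y ∈ K_j`. -/
structure MarkovSystem (K : Type*) [MetricSpace K] [MeasurableSpace K]
    (N : Type*) (E : Type*) where
  Kset : N → Set K
  Kset_nonempty : ∀ j, (Kset j).Nonempty
  Kset_measurable : ∀ j, MeasurableSet (Kset j)
  Kset_disjoint : Pairwise (Function.onFun Disjoint Kset)
  Kset_cover : (⋃ j, Kset j) = Set.univ
  i : E → N
  t : E → N
  i_surj : Function.Surjective i
  w : E → K → K
  p : E → K → ℝ
  w_measurable : ∀ e, Measurable (w e)
  p_measurable : ∀ e, Measurable (p e)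
  p_nonneg : ∀ e x, 0 ≤ p e x
  p_le_one : ∀ e x, p e x ≤ 1
  p_zero_outside : ∀ e x, x ∉ Kset (i e) → p e x = 0
  w_mapsTo : ∀ e, Set.MapsTo (w e) (Kset (i e)) (Kset (t e))
  p_pos_somewhere : ∀ e, ∃ x ∈ Kset (i e), 0 < p e x
  p_tsum_one : ∀ j, ∀ x ∈ Kset j, (∑' e : {e : E // i e = j}, p e.val x) = 1

/-- `Ē = E ∪ {∞}` (one-point compactification); with `E` countable its Borel σ-algebra
consists of all subsets. -/
instance optionMeasurableSpace (E : Type*) : MeasurableSpace (Option E) := ⊤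

/-- The code space `Σ̄ = Ē^ℤ`, carrying the product σ-algebra. -/
abbrev CodeSpace (E : Type*) : Type _ := ℤ → Option E

/-- The left shift `S` on the code space, `(Sσ)_{k-1} = σ_k`. -/
def shiftMap (E : Type*) : CodeSpace E → CodeSpace E := fun σ k => σ (k + 1)

/-- The cylinder set `_m[es₀, …, es_{n}] = {σ : σ_{m+k} = es_k}`. -/
def cylSetL {E : Type*} (m : ℤ) (es : List (Option E)) : Set (CodeSpace E) :=
  {σ | ∀ (k : ℕ) (h : k < es.length), σ (m + (k : ℤ)) = es.get ⟨k, h⟩}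

/-- The σ-algebra `𝓕` generated by the cylinder sets `_m[e_m, …, e_0]`, `m ≤ 0`. -/
def pastAlgebra (E : Type*) : MeasurableSpace (CodeSpace E) :=
  MeasurableSpace.generateFrom
    {A | ∃ es : List (Option E), es ≠ [] ∧ A = cylSetL (1 - (es.length : ℤ)) es}

/-- The conditional entropy `h_S(Λ) = H_Λ((_1[e])_{e ∈ Ē} | 𝓕)`. -/
def entropyS {E : Type*} (Λ : Measure (CodeSpace E)) : ℝ≥0∞ :=
  ∑' eo : Option E,
    ∫⁻ σ, ENNReal.ofReal
        (Real.negMulLog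
          ((Λ[Set.indicator {τ : CodeSpace E | τ 1 = eo} (fun _ => (1 : ℝ)) | pastAlgebra E]) σ)) ∂Λ

namespace MarkovSystem

variable {K : Type*} [MetricSpace K] [MeasurableSpace K] {N E : Type*}

/-- The Markov operator `Uf = ∑_e p_e · (f ∘ w_e)` acting on nonnegative Borel functions. -/
def markovOp (M : MarkovSystem K N E) (f : K → ℝ≥0∞) : K → ℝ≥0∞ :=
  fun x => ∑' e : E, ENNReal.ofReal (M.p e x) * f (M.w e x)

/-- The adjoint operator `U*` acting on measures, `(U*ν)(B) = ∫ U(1_B) dν`. -/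
def adjOp (M : MarkovSystem K N E) (ν : Measure K) : Measure K :=
  Measure.sum fun e : E =>
    Measure.map (M.w e) (ν.withDensity fun x => ENNReal.ofReal (M.p e x))

/-- `μ ∈ P(M)`: `μ` is an invariant Borel probability measure, `U*μ = μ`. -/
def IsInvariantMeasure (M : MarkovSystem K N E) (μ : Measure K) : Prop :=
  IsProbabilityMeasure μ ∧ M.adjOp μ = μ

/-- The path space `Σ_G`: all coordinates lie in `E` and `i(σ_{n+1}) = t(σ_n)`. -/
def pathSpace (M : MarkovSystem K N E) : Set (CodeSpace E) :=
  {σ | ∀ n : ℤ, ∃ e e' : E, σ n = some e ∧ σ (n + 1) = some e' ∧ M.i e' = M.t e}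

/-- `T_j = {σ ∈ Σ_G : t(σ_0) = j}`. -/
def Tset (M : MarkovSystem K N E) (j : N) : Set (CodeSpace E) :=
  {σ | σ ∈ M.pathSpace ∧ ∃ e : E, σ 0 = some e ∧ M.t e = j}

/-- `w` extended to `Ē`, with `w_∞ = id`. -/
def wext (M : MarkovSystem K N E) : Option E → K → K := fun o => o.elim id M.w

/-- `p` extended to `Ē`, with `p_∞ = 0`. -/
def pext (M : MarkovSystem K N E) : Option E → K → ℝ := fun o => o.elim (fun _ => 0) M.p

/-- `i` extended to `Ē`, with `i(∞) = j₀`. -/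
def iext (M : MarkovSystem K N E) (j0 : N) : Option E → N := fun o => o.elim j0 M.i

/-- `t` extended to `Ē`, with `t(∞) = j₀`. -/
def text (M : MarkovSystem K N E) (j0 : N) : Option E → N := fun o => o.elim j0 M.t

/-- `iterW M σ n y = w_{σ_0} ∘ w_{σ_{-1}} ∘ ⋯ ∘ w_{σ_{-n}} (y)`. -/
def iterW (M : MarkovSystem K N E) (σ : CodeSpace E) : ℕ → K → K
  | 0, y => M.wext (σ 0) y
  | n + 1, y => M.iterW σ n (M.wext (σ (-(n + 1 : ℤ))) y)

/-- `orbit M j0 xp σ n = w_{σ_0} ∘ ⋯ ∘ w_{σ_{-n}} (x_{i(σ_{-n})})`. -/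
def orbit (M : MarkovSystem K N E) (j0 : N) (xp : N → K) (σ : CodeSpace E) (n : ℕ) : K :=
  M.iterW σ n (xp (M.iext j0 (σ (-(n : ℤ)))))

/-- `D`: the set of `σ ∈ Σ_G` for which `lim_{m → -∞} w_{σ_0} ∘ ⋯ ∘ w_{σ_m}(x_{i(σ_m)})` exists. -/
def codeDomain (M : MarkovSystem K N E) (j0 : N) (xp : N → K) : Set (CodeSpace E) :=
  {σ | σ ∈ M.pathSpace ∧ ∃ l : K, Tendsto (fun n : ℕ => M.orbit j0 xp σ n) atTop (𝓝 l)}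

/-- The coding map `F`: the above limit on `D`, and `x_{t(σ_0)}` elsewhere. -/
def code (M : MarkovSystem K N E) (j0 : N) (xp : N → K) (σ : CodeSpace E) : K :=
  if h : σ ∈ M.codeDomain j0 xp then h.2.choose else xp (M.text j0 (σ 0))

/-- `Λ ∈ E(M)`: `Λ` is a shift-invariant Borel probability measure with `Λ(D) = 1` and
`E_Λ(1_{_1[e]} | 𝓕) = p_e ∘ F` `Λ`-a.e. for every `e ∈ E` (an equilibrium state). -/
def IsEquilibrium (M : MarkovSystem K N E) (j0 : N) (xp : N → K)
    (Λ : Measure (CodeSpace E)) : Prop :=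
  IsProbabilityMeasure Λ ∧ Measure.map (shiftMap E) Λ = Λ ∧
    Λ (M.codeDomain j0 xp) = 1 ∧
    ∀ e : E,
      (Λ[Set.indicator {σ : CodeSpace E | σ 1 = some e} (fun _ => (1 : ℝ)) | pastAlgebra E])
        =ᵐ[Λ] fun σ => M.p e (M.code j0 xp σ)

/-- `pbar` is the family of continuous extensions `p̄_e` of `p_e|_{K_{i(e)}}` to the closure
of `K_{i(e)}`, extended further by zero on `K`. -/
def IsUCExtensionP (M : MarkovSystem K N E) (pbar : E → K → ℝ) : Prop :=
  ∀ e : E, ContinuousOn (pbar e) (closure (M.Kset (M.i e))) ∧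
    (∀ x ∈ M.Kset (M.i e), pbar e x = M.p e x) ∧
    (∀ x, x ∉ closure (M.Kset (M.i e)) → pbar e x = 0)

/-- `wb` is a family of continuous extensions `w̄_e` of `w_e|_{K_{i(e)}}` to the closure
of `K_{i(e)}`. -/
def IsUCExtensionW (M : MarkovSystem K N E) (wb : E → K → K) : Prop :=
  ∀ e : E, ContinuousOn (wb e) (closure (M.Kset (M.i e))) ∧
    (∀ x ∈ M.Kset (M.i e), wb e x = M.w e x)

/-- The Markov system is uniformly continuous: each `w_e|_{K_{i(e)}}` and `p_e|_{K_{i(e)}}`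
is uniformly continuous. -/
def IsUniformlyContinuous (M : MarkovSystem K N E) : Prop :=
  ∀ e : E, UniformContinuousOn (M.w e) (M.Kset (M.i e)) ∧
    UniformContinuousOn (M.p e) (M.Kset (M.i e))

/-- `∂p_e = p̄_e · 1_{cl(K_{i(e)}) \ K_{i(e)}}`. -/
def dp (M : MarkovSystem K N E) (pbar : E → K → ℝ) (e : E) : K → ℝ :=
  Set.indicator (closure (M.Kset (M.i e)) \ M.Kset (M.i e)) (pbar e)

/-- `Λ ∈ Ẽ(M)` (asymptotic state): shift-invariant probability with `Λ(D) = 1` and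
`E_Λ(1_{_1[e]} | 𝓕) = (p̄_e ∘ F)·1_{T_{i(e)}}` `Λ`-a.e. for every `e`. -/
def IsAsymptotic (M : MarkovSystem K N E) (j0 : N) (xp : N → K) (pbar : E → K → ℝ)
    (Λ : Measure (CodeSpace E)) : Prop :=
  IsProbabilityMeasure Λ ∧ Measure.map (shiftMap E) Λ = Λ ∧
    Λ (M.codeDomain j0 xp) = 1 ∧
    ∀ e : E,
      (Λ[Set.indicator {σ : CodeSpace E | σ 1 = some e} (fun _ => (1 : ℝ)) | pastAlgebra E])
        =ᵐ[Λ] Set.indicator (M.Tset (M.i e)) (fun σ => pbar e (M.code j0 xp σ))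

/-- `Λ ∈ E_⊥(M)`: shift-invariant probability with `Λ(D) = 1` and
`E_Λ(1_{_1[e]} | 𝓕) = (∂p_e ∘ F)·1_{T_{i(e)}}` `Λ`-a.e. for every `e`. -/
def IsPerp (M : MarkovSystem K N E) (j0 : N) (xp : N → K) (pbar : E → K → ℝ)
    (Λ : Measure (CodeSpace E)) : Prop :=
  IsProbabilityMeasure Λ ∧ Measure.map (shiftMap E) Λ = Λ ∧
    Λ (M.codeDomain j0 xp) = 1 ∧
    ∀ e : E,
      (Λ[Set.indicator {σ : CodeSpace E | σ 1 = some e} (fun _ => (1 : ℝ)) | pastAlgebra E])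
        =ᵐ[Λ] Set.indicator (M.Tset (M.i e)) (fun σ => M.dp pbar e (M.code j0 xp σ))

/-- `G = ⋃_{k ≥ 0} ⋃_{j ∈ N} S^{-k}(F^{-1}(K_j) ∩ T_j)`. -/
def Gset (M : MarkovSystem K N E) (j0 : N) (xp : N → K) : Set (CodeSpace E) :=
  ⋃ (k : ℕ) (j : N), (shiftMap E)^[k] ⁻¹' ((M.code j0 xp) ⁻¹' (M.Kset j) ∩ M.Tset j)

/-- `M` is non-degenerate: for every asymptotic state `Λ` there is `i ∈ N` with
`Λ(T_i ∩ F^{-1}(K_i)) > 0`. -/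
def IsNonDegenerate (M : MarkovSystem K N E) (j0 : N) (xp : N → K) (pbar : E → K → ℝ) : Prop :=
  ∀ Λ : Measure (CodeSpace E), M.IsAsymptotic j0 xp pbar Λ →
    ∃ i : N, 0 < Λ (M.Tset i ∩ (M.code j0 xp) ⁻¹' (M.Kset i))

/-- `M` is consistent: `F(Λ) ∈ P(M)` for every asymptotic state `Λ`. -/
def IsConsistent (M : MarkovSystem K N E) (j0 : N) (xp : N → K) (pbar : E → K → ℝ) : Prop :=
  ∀ Λ : Measure (CodeSpace E), M.IsAsymptotic j0 xp pbar Λ →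
    M.IsInvariantMeasure (Measure.map (M.code j0 xp) Λ)

/-- `Rf = ∑_e ∂p_e · (f ∘ w̄_e)`. -/
def Rop (M : MarkovSystem K N E) (pbar : E → K → ℝ) (wb : E → K → K)
    (f : K → ℝ≥0∞) : K → ℝ≥0∞ :=
  fun x => ∑' e : E, ENNReal.ofReal (M.dp pbar e x) * f (wb e x)

/-- `Ω = ⋂_{n ≥ 1} {R^n 1 ≥ 1}`. -/
def OmegaSet (M : MarkovSystem K N E) (pbar : E → K → ℝ) (wb : E → K → K) : Set K :=
  ⋂ n : ℕ, {x : K | 1 ≤ (M.Rop pbar wb)^[n + 1] (fun _ => 1) x}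

/-- `ξ_j = ∑_{e, i(e) = j} sup_{x ∈ K_j} p_e(x)`. -/
def xi (M : MarkovSystem K N E) (j : N) : ℝ≥0∞ :=
  ∑' e : {e : E // M.i e = j}, ⨆ x ∈ M.Kset j, ENNReal.ofReal (M.p e.val x)

/-- `M` has a dominating Markov chain: `ξ_j < ∞` for all `j ∈ N`. -/
def HasDominatingChain (M : MarkovSystem K N E) : Prop := ∀ j : N, M.xi j ≠ ⊤

/-- `ξ_j · q_{j j'} = ∑_{e, i(e) = j, t(e) = j'} sup_{x ∈ K_j} p_e(x)`. -/
def xiq (M : MarkovSystem K N E) (j j' : N) : ℝ≥0∞ :=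
  ∑' e : {e : E // M.i e = j ∧ M.t e = j'}, ⨆ x ∈ M.Kset j, ENNReal.ofReal (M.p e.val x)

/-- `c = ∑_{j'} sup_j ξ_j q_{j j'}`. -/
def cConst (M : MarkovSystem K N E) : ℝ≥0∞ := ∑' j' : N, ⨆ j : N, M.xiq j j'

/-- `α^{x_0}_n({j}) = (1/n) ∑_{k=1}^n ((U*)^k δ_{x_0})(K_j)`. -/
def alphaMeas (M : MarkovSystem K N E) (x0 : K) (n : ℕ) (j : N) : ℝ≥0∞ :=
  (n : ℝ≥0∞)⁻¹ * ∑ k ∈ Finset.range n, (M.adjOp^[k + 1] (Measure.dirac x0)) (M.Kset j)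

/-- Condition (T) at `x_0`: the sequence `(α^{x_0}_n)_n` is uniformly tight. -/
def ConditionT (M : MarkovSystem K N E) (x0 : K) : Prop :=
  ∀ ε : ℝ, 0 < ε → ∃ V : Finset N,
    ∀ n : ℕ, (∑' j : {j : N // j ∉ V}, M.alphaMeas x0 (n + 1) j.val) < ENNReal.ofReal ε

/-- `M` is contractive with contraction rate `a`:
`∑_{e, i(e) = j} p_e(x) d(w_e x, w_e y) ≤ a·d(x, y)` on each `K_j`. -/
def IsContractive (M : MarkovSystem K N E) (a : ℝ) : Prop :=
  ∀ j : N, ∀ x ∈ M.Kset j, ∀ y ∈ M.Kset j,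
    (∑' e : {e : E // M.i e = j},
        ENNReal.ofReal (M.p e.val x * dist (M.w e.val x) (M.w e.val y)))
      ≤ ENNReal.ofReal (a * dist x y)

/-- `L(x) = ∑_j d(x, x_j)·1_{K_j}(x)`. -/
def Lfun (M : MarkovSystem K N E) (xp : N → K) : K → ℝ≥0∞ :=
  fun x => ∑' j : N, Set.indicator (M.Kset j) (fun y => ENNReal.ofReal (dist y (xp j))) x

/-- `b = sup_j sup_{x ∈ K_j} ∑_{e, i(e) = j} p_e(x)·d(w_e(x_{i(e)}), x_{t(e)})`. -/
def bConst (M : MarkovSystem K N E) (xp : N → K) : ℝ≥0∞ :=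
  ⨆ j : N, ⨆ x ∈ M.Kset j,
    ∑' e : {e : E // M.i e = j},
      ENNReal.ofReal (M.p e.val x * dist (M.w e.val (xp (M.i e.val))) (xp (M.t e.val)))

/-- `P^m_x` evaluated on a word: `p_{e_0}(x)·p_{e_1}(w_{e_0}x)·⋯`. -/
def wordProb (M : MarkovSystem K N E) : List (Option E) → K → ℝ
  | [], _ => 1
  | o :: rest, x => M.pext o x * M.wordProb rest (M.wext o x)

/-- `Λ = Φ(μ)`: `Λ` is a shift-invariant Borel probability measure with
`Λ(_m[e_m, …, e_n]) = ∫ P^m_x(_m[e_m, …, e_n]) dμ(x)` for all cylinders with `m ≤ 0`. -/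
def IsPhiOf (M : MarkovSystem K N E) (μ : Measure K) (Λ : Measure (CodeSpace E)) : Prop :=
  IsProbabilityMeasure Λ ∧ Measure.map (shiftMap E) Λ = Λ ∧
    ∀ m : ℤ, m ≤ 0 → ∀ es : List (Option E),
      Λ (cylSetL m es) = ∫⁻ x, ENNReal.ofReal (M.wordProb es x) ∂μ

/-- The (negative of the) energy function: `-u(σ) = -log p_{σ_1}(F(σ))` on `D`
(`+∞` if `p_{σ_1}(F(σ)) = 0`) and `+∞` off `D`, valued in `[0, ∞]`. -/
def negEnergy (M : MarkovSystem K N E) (j0 : N) (xp : N → K) (σ : CodeSpace E) : ℝ≥0∞ :=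
  if σ ∈ M.codeDomain j0 xp then
    (σ 1).elim ⊤ fun e =>
      if M.p e (M.code j0 xp σ) = 0 then ⊤
      else ENNReal.ofReal (-Real.log (M.p e (M.code j0 xp σ)))
  else ⊤

/-- The free energy `h_S(Λ) + ∫ u dΛ`, as an extended real number. -/
def freeEnergy (M : MarkovSystem K N E) (j0 : N) (xp : N → K)
    (Λ : Measure (CodeSpace E)) : EReal :=
  (entropyS Λ : EReal) - ((∫⁻ σ, M.negEnergy j0 xp σ ∂Λ : ℝ≥0∞) : EReal)

/-- `Λ₀ ∈ E(u)`: `Λ₀` is a thermodynamic equilibrium state for the energy function `u`. -/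
def IsEquilibriumForU (M : MarkovSystem K N E) (j0 : N) (xp : N → K)
    (Λ0 : Measure (CodeSpace E)) : Prop :=
  IsProbabilityMeasure Λ0 ∧ Measure.map (shiftMap E) Λ0 = Λ0 ∧ entropyS Λ0 ≠ ⊤ ∧
    M.freeEnergy j0 xp Λ0 =
      sSup {r : EReal | ∃ Λ : Measure (CodeSpace E),
        IsProbabilityMeasure Λ ∧ Measure.map (shiftMap E) Λ = Λ ∧ entropyS Λ ≠ ⊤ ∧
          r = M.freeEnergy j0 xp Λ}

end MarkovSystem

end

variable {K : Type*} [MetricSpace K] [CompleteSpace K] [MeasurableSpace K] [BorelSpace K]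
  {N E : Type*} [Countable N] [Countable E]

/-! Run the chain from `x₀ = x_{j0}` and record the edges it travels as a two-sided code. The
probability of travelling a given edge is bounded uniformly in time, and `c < ∞` makes these bounds
summable over `E`; hence the laws of all shifts of these codes are tight and their time averages
have a shift-invariant limit point `Λ` that charges only genuine paths. Contractivity and `b < ∞`
bound the mean distance of the chain to the base points, so re-starting the last `m + 1` steps at a
base point moves the current position by `O(a ^ (m + 1))` in mean. In the limit the backward
compositions therefore converge `Λ`-almost everywhere, that is `Λ(D) = 1`, and, `p_e` being
uniformly continuous, the probability that `e` comes next given the past is the limit `p̄_e ∘ F` of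
`p_e` along these compositions. So `Λ ∈ Ẽ(M)`, and consistency makes `F(Λ)` invariant. -/

noncomputable section

section KrylovBogoliubov

variable {Ω : Type*} [MeasurableSpace Ω]

/-- The time average `n⁻¹ ∑_{k < n} (S^k)_* Q` of the law `Q` along `S`; it is a probability
measure only for `n ≠ 0`, the average over no times being `0`. -/
def orbitAverage (S : Ω → Ω) (Q : Measure Ω) (n : ℕ) : Measure Ω :=
  (n : ℝ≥0∞)⁻¹ • ∑ k ∈ Finset.range n, Q.map S^[k]

lemma inv_mul_sum_range_le {n : ℕ} {f : ℕ → ℝ≥0∞} {c : ℝ≥0∞} (hf : ∀ k < n, f k ≤ c) :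
    (n : ℝ≥0∞)⁻¹ * ∑ k ∈ Finset.range n, f k ≤ c := by
  calc (n : ℝ≥0∞)⁻¹ * ∑ k ∈ Finset.range n, f k
      ≤ (n : ℝ≥0∞)⁻¹ * (n * c) := by
        gcongr
        simpa using Finset.sum_le_card_nsmul _ _ c fun k hk => hf k (Finset.mem_range.1 hk)
    _ ≤ c := by
        rw [← mul_assoc]
        exact mul_le_of_le_one_left' (ENNReal.inv_mul_le_one _)

lemma tendsto_inv_natCast_mul_nhds_zero {C : ℝ≥0∞} (hC : C ≠ ⊤) :
    Tendsto (fun n : ℕ => (n : ℝ≥0∞)⁻¹ * C) atTop (𝓝 0) := by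
  simpa using ENNReal.Tendsto.mul_const ENNReal.tendsto_inv_nat_nhds_zero (Or.inr hC)

lemma isProbabilityMeasure_orbitAverage {S : Ω → Ω} (hS : Measurable S) (Q : Measure Ω)
    [IsProbabilityMeasure Q] {n : ℕ} (hn : n ≠ 0) : IsProbabilityMeasure (orbitAverage S Q n) := by
  constructor
  have h (k : ℕ) : Q.map S^[k] Set.univ = 1 := by
    rw [Measure.map_apply (hS.iterate k) .univ, Set.preimage_univ, measure_univ]
  simp [orbitAverage, h, ENNReal.inv_mul_cancel, hn]

lemma isTightMeasureSet_orbitAverage [TopologicalSpace Ω] {S : Ω → Ω} {Q : ℕ → Measure Ω}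
    (hT : IsTightMeasureSet (Set.range fun x : ℕ × ℕ => (Q x.1).map S^[x.2])) :
    IsTightMeasureSet (Set.range fun n => orbitAverage S (Q n) n) := by
  rw [isTightMeasureSet_iff_exists_isCompact_measure_compl_le] at hT ⊢
  intro ε hε
  obtain ⟨C, hC, hQ⟩ := hT ε hε
  refine ⟨C, hC, ?_⟩
  rintro _ ⟨n, rfl⟩
  simp only [orbitAverage, Measure.smul_apply, Measure.finsetSum_apply, smul_eq_mul]
  exact inv_mul_sum_range_le fun k _ => hQ _ ⟨(n, k), rfl⟩

variable [TopologicalSpace Ω]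

lemma enorm_integral_comp_le (Q : Measure Ω) [IsProbabilityMeasure Q] (φ : Ω → Ω)
    (g : BoundedContinuousFunction Ω ℝ) : ‖∫ ω, g (φ ω) ∂Q‖ₑ ≤ ‖g‖ₑ := by
  calc ‖∫ ω, g (φ ω) ∂Q‖ₑ ≤ ∫⁻ ω, ‖g (φ ω)‖ₑ ∂Q := enorm_integral_le_lintegral_enorm _
    _ ≤ ∫⁻ _, ‖g‖ₑ ∂Q := lintegral_mono fun ω => enorm_le_iff_norm_le.2 (g.norm_coe_le_norm _)
    _ = ‖g‖ₑ := by simp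

variable [BorelSpace Ω]

lemma exists_tendsto_hyperfilter_of_isTightMeasureSet [T2Space Ω] (A : ℕ → ProbabilityMeasure Ω)
    (hA : IsTightMeasureSet (Set.range fun n => (A n : Measure Ω))) :
    ∃ Λ, Tendsto A (hyperfilter ℕ) (𝓝 Λ) := by
  have hcomp : IsCompact (closure (Set.range A)) := by
    refine isCompact_closure_of_isTightMeasureSet (hA.subset ?_)
    rintro _ ⟨_, ⟨n, rfl⟩, rfl⟩
    exact ⟨n, rfl⟩
  obtain ⟨Λ, -, hΛ⟩ := hcomp.ultrafilter_le_nhds ((hyperfilter ℕ).map A) <|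
    le_principal_iff.2 (mem_of_superset range_mem_map subset_closure)
  exact ⟨Λ, hΛ⟩

variable {S : Ω → Ω}

lemma enorm_integral_orbitAverage_le (hS : Continuous S) (Q : Measure Ω) [IsFiniteMeasure Q]
    (n : ℕ) (g : BoundedContinuousFunction Ω ℝ) :
    ‖∫ ω, g ω ∂(orbitAverage S Q n)‖ₑ ≤
      (n : ℝ≥0∞)⁻¹ * ‖∑ k ∈ Finset.range n, ∫ ω, g (S^[k] ω) ∂Q‖ₑ := by
  have hint : ∫ ω, g ω ∂(orbitAverage S Q n) =
      (n : ℝ)⁻¹ * ∑ k ∈ Finset.range n, ∫ ω, g (S^[k] ω) ∂Q := by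
    rw [orbitAverage, integral_smul_measure,
      integral_finsetSum_measure fun k _ => g.integrable (Q.map S^[k])]
    simp [integral_map (hS.iterate _).aemeasurable g.continuous.aestronglyMeasurable]
  rw [hint, enorm_mul]
  gcongr
  rcases eq_or_ne n 0 with rfl | hn
  · simp
  · rw [enorm_inv (by exact_mod_cast hn), Real.enorm_natCast]

lemma enorm_integral_orbitAverage_le_add (hS : Continuous S) (Q : Measure Ω)
    [IsProbabilityMeasure Q] {n m : ℕ} (g : BoundedContinuousFunction Ω ℝ) {c : ℝ≥0∞}
    (hg : ∀ k, m ≤ k → k < n → ‖∫ ω, g (S^[k] ω) ∂Q‖ₑ ≤ c) :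
    ‖∫ ω, g ω ∂(orbitAverage S Q n)‖ₑ ≤ (n : ℝ≥0∞)⁻¹ * (m * ‖g‖ₑ) + c := by
  have hterm : ∀ k ∈ Finset.range n, ‖∫ ω, g (S^[k] ω) ∂Q‖ₑ ≤ (if k < m then ‖g‖ₑ else 0) + c := by
    intro k hk
    split_ifs with hkm
    · exact (enorm_integral_comp_le Q _ g).trans le_self_add
    · simpa using hg k (not_lt.1 hkm) (Finset.mem_range.1 hk)
  have hfilter : ∑ k ∈ Finset.range n, (if k < m then ‖g‖ₑ else 0) ≤ m * ‖g‖ₑ := by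
    rw [← Finset.sum_filter, Finset.sum_const, nsmul_eq_mul]
    gcongr
    simpa using Finset.card_le_card (t := Finset.range m) fun k hk => by
      simpa using (Finset.mem_filter.1 hk).2
  calc ‖∫ ω, g ω ∂(orbitAverage S Q n)‖ₑ
      ≤ (n : ℝ≥0∞)⁻¹ * ‖∑ k ∈ Finset.range n, ∫ ω, g (S^[k] ω) ∂Q‖ₑ :=
        enorm_integral_orbitAverage_le hS Q n g
    _ ≤ (n : ℝ≥0∞)⁻¹ * ∑ k ∈ Finset.range n, ((if k < m then ‖g‖ₑ else 0) + c) := by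
        gcongr
        exact (enorm_sum_le _ _).trans (Finset.sum_le_sum hterm)
    _ ≤ (n : ℝ≥0∞)⁻¹ * (m * ‖g‖ₑ) + c := by
        rw [Finset.sum_add_distrib, mul_add]
        gcongr
        exact inv_mul_sum_range_le fun _ _ => le_rfl

lemma enorm_integral_comp_sub_orbitAverage_le (hS : Continuous S) (Q : Measure Ω)
    [IsProbabilityMeasure Q] (n : ℕ) (g : BoundedContinuousFunction Ω ℝ) :
    ‖∫ ω, (g.compContinuous ⟨S, hS⟩ - g) ω ∂(orbitAverage S Q n)‖ₑ
      ≤ (n : ℝ≥0∞)⁻¹ * (2 * ‖g‖ₑ) := by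
  have hint (k : ℕ) : Integrable (fun ω => g (S^[k] ω)) Q :=
    (g.compContinuous ⟨_, hS.iterate k⟩).integrable Q
  have htelescope : ∑ k ∈ Finset.range n, ∫ ω, (g.compContinuous ⟨S, hS⟩ - g) (S^[k] ω) ∂Q
      = ∫ ω, g (S^[n] ω) ∂Q - ∫ ω, g (S^[0] ω) ∂Q := by
    rw [← Finset.sum_range_sub fun k => ∫ ω, g (S^[k] ω) ∂Q]
    refine Finset.sum_congr rfl fun k _ => ?_
    rw [← integral_sub (hint _) (hint _)]
    simp [Function.iterate_succ_apply']
  refine (enorm_integral_orbitAverage_le hS Q n _).trans ?_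
  gcongr
  rw [htelescope, two_mul]
  exact enorm_sub_le.trans
    (add_le_add (enorm_integral_comp_le Q _ g) (enorm_integral_comp_le Q _ g))

/-- **Krylov–Bogoliubov.** The bounds survive because the first `m` times contribute only `O(1 / n)`
to the average over `n` times. -/
theorem exists_invariant_measure_of_isTightMeasureSet [T2Space Ω] [HasOuterApproxClosed Ω]
    (hS : Continuous S) (Q : ℕ → Measure Ω) [∀ n, IsProbabilityMeasure (Q n)]
    (hT : IsTightMeasureSet (Set.range fun x : ℕ × ℕ => (Q x.1).map S^[x.2])) :
    ∃ Λ : Measure Ω, IsProbabilityMeasure Λ ∧ Λ.map S = Λ ∧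
      ∀ (g : BoundedContinuousFunction Ω ℝ) (m : ℕ) (c : ℝ≥0∞),
        (∀ n k, m ≤ k → k < n → ‖∫ ω, g (S^[k] ω) ∂(Q n)‖ₑ ≤ c) → ‖∫ ω, g ω ∂Λ‖ₑ ≤ c := by
  let A (n : ℕ) : ProbabilityMeasure Ω := ⟨orbitAverage S (Q (n + 1)) (n + 1),
    isProbabilityMeasure_orbitAverage hS.measurable _ n.succ_ne_zero⟩
  obtain ⟨Λ, hΛ⟩ := exists_tendsto_hyperfilter_of_isTightMeasureSet A <|
    (isTightMeasureSet_orbitAverage hT).subset (Set.range_subset_iff.2 fun n => ⟨n + 1, rfl⟩)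
  have hbound (g : BoundedContinuousFunction Ω ℝ) {C c : ℝ≥0∞} (hC : C ≠ ⊤)
      (h : ∀ n : ℕ, ‖∫ ω, g ω ∂(A n : Measure Ω)‖ₑ ≤ ((n + 1 : ℕ) : ℝ≥0∞)⁻¹ * C + c) :
      ‖∫ ω, g ω ∂(Λ : Measure Ω)‖ₑ ≤ c := by
    have hlim : Tendsto (fun n : ℕ => ((n + 1 : ℕ) : ℝ≥0∞)⁻¹ * C + c) (hyperfilter ℕ) (𝓝 c) := by
      simpa using (((tendsto_inv_natCast_mul_nhds_zero hC).comp
        (tendsto_add_atTop_nat 1)).add_const c).mono_left Nat.hyperfilter_le_atTop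
    exact le_of_tendsto_of_tendsto'
      ((ProbabilityMeasure.tendsto_iff_forall_integral_tendsto.1 hΛ g).enorm) hlim h
  refine ⟨Λ, inferInstance, ?_, fun g m c hg => ?_⟩
  · have := Measure.isProbabilityMeasure_map (μ := (Λ : Measure Ω)) hS.aemeasurable
    refine ext_of_forall_integral_eq_of_IsFiniteMeasure fun g => ?_
    have hzero : ‖∫ ω, (g.compContinuous ⟨S, hS⟩ - g) ω ∂(Λ : Measure Ω)‖ₑ ≤ 0 :=
      hbound _ (C := 2 * ‖g‖ₑ) (by finiteness) fun n =>
        (enorm_integral_comp_sub_orbitAverage_le hS (Q (n + 1)) (n + 1) g).trans le_self_add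
    have hsub := integral_sub ((g.compContinuous ⟨S, hS⟩).integrable (Λ : Measure Ω))
      (g.integrable _)
    rw [integral_map hS.aemeasurable g.continuous.aestronglyMeasurable]
    exact sub_eq_zero.1 (hsub.symm.trans (enorm_eq_zero.1 (le_zero_iff.1 hzero)))
  · exact hbound g (C := m * ‖g‖ₑ) (by finiteness)
      fun n => enorm_integral_orbitAverage_le_add hS _ g (hg (n + 1))

end KrylovBogoliubov

section Tightness

lemma isTightMeasureSet_pi {ι : Type*} [Countable ι] {X : ι → Type*}
    [∀ i, TopologicalSpace (X i)] [∀ i, MeasurableSpace (X i)] {A : Set (Measure (∀ i, X i))}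
    (hA : ∀ i, IsTightMeasureSet ((fun μ => μ.map fun x => x i) '' A)) : IsTightMeasureSet A := by
  simp only [isTightMeasureSet_iff_exists_isCompact_measure_compl_le] at hA ⊢
  intro ε hε
  obtain ⟨δ, hδ, hδε⟩ := ENNReal.exists_pos_sum_of_countable' hε.ne' ι
  choose C hC hμ using fun i => hA i (δ i) (hδ i)
  refine ⟨Set.univ.pi C, isCompact_univ_pi hC, fun μ hμA => ?_⟩
  have hcompl : (Set.univ.pi C)ᶜ = ⋃ i, (fun x => x i) ⁻¹' (C i)ᶜ := by
    ext x
    simp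
  calc μ (Set.univ.pi C)ᶜ ≤ ∑' i, μ ((fun x => x i) ⁻¹' (C i)ᶜ) := by
        rw [hcompl]
        exact measure_iUnion_le _
    _ ≤ ∑' i, μ.map (fun x => x i) (C i)ᶜ :=
        ENNReal.tsum_le_tsum fun i => Measure.le_map_apply (measurable_pi_apply i).aemeasurable _
    _ ≤ ∑' i, δ i := ENNReal.tsum_le_tsum fun i => hμ i _ ⟨μ, hμA, rfl⟩
    _ ≤ ε := hδε.le

lemma isTightMeasureSet_of_singleton_le {X : Type*} [Countable X] [MeasurableSpace X]
    [TopologicalSpace X] {A : Set (Measure X)} {θ : X → ℝ≥0∞} (hθ : ∑' x, θ x ≠ ⊤)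
    (hA : ∀ μ ∈ A, ∀ x, μ {x} ≤ θ x) : IsTightMeasureSet A := by
  rw [isTightMeasureSet_iff_exists_isCompact_measure_compl_le]
  intro ε hε
  obtain ⟨s, hs⟩ := ((ENNReal.tendsto_tsum_compl_atTop_zero hθ).eventually_le_const hε).exists
  refine ⟨s, s.finite_toSet.isCompact, fun μ hμ => ?_⟩
  have hcompl : (s : Set X)ᶜ = ⋃ x : {x // x ∉ s}, {x.1} := by
    ext x
    simp
  calc μ (s : Set X)ᶜ ≤ ∑' x : {x // x ∉ s}, μ {x.1} := by
        rw [hcompl]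
        exact measure_iUnion_le _
    _ ≤ ∑' x : {x // x ∉ s}, θ x := ENNReal.tsum_le_tsum fun x => hA μ hμ x
    _ ≤ ε := hs

end Tightness

section ProductSpace

variable {ι : Type*} {α : ι → Type*} {X : Type*}

lemma continuous_of_dependsOn [∀ i, TopologicalSpace (α i)] [∀ i, DiscreteTopology (α i)]
    [TopologicalSpace X] {f : (∀ i, α i) → X} {s : Set ι} (hs : s.Finite) (hf : DependsOn f s) :
    Continuous f := by
  rw [continuous_iff_continuousAt]
  intro x
  have hnear : ∀ᶠ y in 𝓝 x, ∀ i ∈ s, y i = x i :=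
    hs.eventually_all.2 fun i _ => (continuous_apply i).continuousAt.eventually
      (isOpen_discrete {x i} |>.mem_nhds rfl)
  exact tendsto_const_nhds.congr' (hnear.mono fun y hy => (hf hy).symm)

end ProductSpace

section Translation

variable {α : Type*} [MeasurableSpace α] {Λ : Measure (ℤ → α)}

lemma map_translation_eq (hΛ : Λ.map (fun σ k => σ (k + 1)) = Λ) (n : ℤ) :
    Λ.map (fun σ k => σ (k + n)) = Λ := by
  have hmeas (m : ℤ) : Measurable fun (σ : ℤ → α) k => σ (k + m) :=
    measurable_pi_lambda _ fun k => measurable_pi_apply _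
  have hcomp (m m' : ℤ) : (Λ.map fun σ k => σ (k + m)).map (fun σ k => σ (k + m')) =
      Λ.map fun σ k => σ (k + (m' + m)) := by
    rw [Measure.map_map (hmeas m') (hmeas m)]
    simp only [Function.comp_def, add_assoc]
  induction n with
  | zero => simp
  | succ n ih => rw [← hcomp 1 n, hΛ, ih]
  | pred n ih =>
    calc Λ.map (fun σ k => σ (k + (-n - 1)))
        = (Λ.map fun σ k => σ (k + 1)).map fun σ k => σ (k + (-n - 1)) := by rw [hΛ]
      _ = Λ := by rw [hcomp, sub_add_cancel, ih]

lemma ae_forall_translation (hΛ : Λ.map (fun σ k => σ (k + 1)) = Λ) {P : (ℤ → α) → Prop}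
    (hP : ∀ᵐ σ ∂Λ, P σ) : ∀ᵐ σ ∂Λ, ∀ n : ℤ, P fun k => σ (k + n) := by
  rw [ae_all_iff]
  intro n
  have hmeas : Measurable fun (σ : ℤ → α) k => σ (k + n) :=
    measurable_pi_lambda _ fun k => measurable_pi_apply _
  exact ae_of_ae_map hmeas.aemeasurable (by rwa [map_translation_eq hΛ])

end Translation

section Analysis

lemma le_add_mul_inv_of_le_mul_add {u : ℕ → ℝ≥0∞} {a b : ℝ≥0∞} (ha : a < 1)
    (hu : ∀ n, u (n + 1) ≤ a * u n + b) (n : ℕ) : u n ≤ u 0 + b * (1 - a)⁻¹ := by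
  have hfix : a * (1 - a)⁻¹ + 1 = (1 - a)⁻¹ := by
    calc a * (1 - a)⁻¹ + 1 = a * (1 - a)⁻¹ + (1 - a) * (1 - a)⁻¹ := by
          rw [ENNReal.mul_inv_cancel (tsub_pos_of_lt ha).ne' (by finiteness)]
      _ = (1 - a)⁻¹ := by rw [← add_mul, add_tsub_cancel_of_le ha.le, one_mul]
  induction n with
  | zero => exact le_self_add
  | succ n ih =>
    calc u (n + 1) ≤ a * u n + b := hu n
      _ ≤ a * (u 0 + b * (1 - a)⁻¹) + b := by gcongr
      _ = a * u 0 + b * (a * (1 - a)⁻¹ + 1) := by ring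
      _ ≤ u 0 + b * (1 - a)⁻¹ := by
        rw [hfix]
        gcongr
        exact mul_le_of_le_one_left' ha.le

lemma tsum_ofReal_pow_succ_mul_ne_top {a : ℝ} (ha1 : a < 1) {D : ℝ≥0∞} (hD : D ≠ ⊤) :
    ∑' m : ℕ, ENNReal.ofReal a ^ (m + 1) * D ≠ ⊤ := by
  rw [ENNReal.tsum_mul_right, ENNReal.tsum_geometric_add_one]
  exact ENNReal.mul_ne_top (ENNReal.mul_ne_top ENNReal.ofReal_ne_top
    (ENNReal.inv_ne_top.2 (tsub_pos_of_lt (ENNReal.ofReal_lt_one.2 ha1)).ne')) hD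

lemma exists_nndist_le_add_mul_of_uniformContinuousOn {X Y : Type*} [PseudoMetricSpace X]
    [PseudoMetricSpace Y] {f : X → Y} {s : Set X} (hf : UniformContinuousOn f s) {B : ℝ≥0}
    (hB : ∀ x ∈ s, ∀ y ∈ s, nndist (f x) (f y) ≤ B) {ε : ℝ≥0} (hε : 0 < ε) :
    ∃ C : ℝ≥0, ∀ x ∈ s, ∀ y ∈ s, nndist (f x) (f y) ≤ ε + C * nndist x y := by
  obtain ⟨δ, hδ, hf⟩ := Metric.uniformContinuousOn_iff.1 hf ε hε
  lift δ to ℝ≥0 using hδ.le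
  refine ⟨B / δ, fun x hx y hy => ?_⟩
  rcases lt_or_ge (nndist x y) δ with hxy | hxy
  · exact (show nndist (f x) (f y) < ε from hf x hx y hy hxy).le.trans le_self_add
  · calc nndist (f x) (f y) ≤ B / δ * δ := by
          rw [div_mul_cancel₀ _ (by exact_mod_cast hδ.ne')]
          exact hB x hx y hy
      _ ≤ ε + B / δ * nndist x y := le_add_left (by gcongr)

lemma exists_tendsto_of_tsum_min_one_edist_ne_top {X : Type*} [PseudoEMetricSpace X]
    [CompleteSpace X] {x : ℕ → X} (hx : ∑' m, min 1 (edist (x m) (x (m + 1))) ≠ ⊤) :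
    ∃ l, Tendsto x atTop (𝓝 l) := by
  obtain ⟨n, hn⟩ := eventually_atTop.1 <|
    (ENNReal.tendsto_atTop_zero_of_tsum_ne_top hx).eventually_lt_const one_pos
  have hcauchy : CauchySeq fun m => x (m + n) := by
    refine cauchySeq_of_edist_le_of_tsum_ne_top
      (fun m => min 1 (edist (x (m + n)) (x (m + n + 1)))) (fun m => ?_)
      (ne_top_of_le_ne_top hx (ENNReal.tsum_comp_le_tsum_of_injective (add_left_injective n) _))
    have hlt := (min_lt_iff.1 (hn (m + n) (n.le_add_left m))).resolve_left (lt_irrefl _)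
    rw [min_eq_right hlt.le, add_right_comm]
  obtain ⟨l, hl⟩ := cauchySeq_tendsto_of_complete hcauchy
  exact ⟨l, (tendsto_add_atTop_iff_nat n).1 hl⟩

lemma ae_exists_tendsto_of_tsum_lintegral_ne_top {Ω X : Type*} [MeasurableSpace Ω]
    [PseudoEMetricSpace X] [CompleteSpace X] {μ : Measure Ω} {x : ℕ → Ω → X}
    (hmeas : ∀ m, AEMeasurable (fun ω => min 1 (edist (x m ω) (x (m + 1) ω))) μ)
    (hx : ∑' m, ∫⁻ ω, min 1 (edist (x m ω) (x (m + 1) ω)) ∂μ ≠ ⊤) :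
    ∀ᵐ ω ∂μ, ∃ l, Tendsto (fun m => x m ω) atTop (𝓝 l) := by
  rw [← lintegral_tsum hmeas] at hx
  filter_upwards [ae_lt_top' (AEMeasurable.tsum hmeas) hx] with ω hω
  exact exists_tendsto_of_tsum_min_one_edist_ne_top hω.ne

end Analysis

section CondExp

variable {Ω F : Type*} {m m0 : MeasurableSpace Ω} {μ : Measure Ω} [NormedAddCommGroup F]
  [NormedSpace ℝ F] {f g : Ω → F} {C : Set (Set Ω)}

lemma setIntegral_eq_of_isPiSystem (hm : m ≤ m0) (hC : m = MeasurableSpace.generateFrom C)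
    (hpi : IsPiSystem C) (hf : Integrable f μ) (hg : Integrable g μ)
    (huniv : ∫ ω, g ω ∂μ = ∫ ω, f ω ∂μ) (h : ∀ s ∈ C, ∫ ω in s, g ω ∂μ = ∫ ω in s, f ω ∂μ)
    {s : Set Ω} (hs : MeasurableSet[m] s) : ∫ ω in s, g ω ∂μ = ∫ ω in s, f ω ∂μ := by
  induction s, hs using MeasurableSpace.induction_on_inter hC hpi with
  | empty => simp
  | basic s hs => exact h s hs
  | compl s hs ih => rw [setIntegral_compl (hm _ hs) hg, setIntegral_compl (hm _ hs) hf, huniv, ih]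
  | iUnion s hdisj hs ih =>
    rw [integral_iUnion (fun i => hm _ (hs i)) hdisj hg.integrableOn,
      integral_iUnion (fun i => hm _ (hs i)) hdisj hf.integrableOn]
    exact tsum_congr ih

lemma ae_eq_condExp_of_isPiSystem [CompleteSpace F] [IsFiniteMeasure μ] (hm : m ≤ m0)
    (hC : m = MeasurableSpace.generateFrom C) (hpi : IsPiSystem C) (hf : Integrable f μ)
    (hg : Integrable g μ) (hgm : AEStronglyMeasurable[m] g μ)
    (huniv : ∫ ω, g ω ∂μ = ∫ ω, f ω ∂μ)
    (h : ∀ s ∈ C, ∫ ω in s, g ω ∂μ = ∫ ω in s, f ω ∂μ) : g =ᵐ[μ] μ[f | m] :=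
  ae_eq_condExp_of_forall_setIntegral_eq hm hf (fun _ _ _ => hg.integrableOn)
    (fun _ hs _ => setIntegral_eq_of_isPiSystem hm hC hpi hf hg huniv h hs) hgm

lemma ae_eq_condExp_of_tendsto [IsFiniteMeasure μ] (hm : m ≤ m0)
    (hC : m = MeasurableSpace.generateFrom C) (hpi : IsPiSystem C) {f g : Ω → ℝ} {v : ℕ → Ω → ℝ}
    {B : ℝ} (hf : Integrable f μ) (hv : ∀ k, Measurable[m] (v k)) (hB : ∀ k ω, ‖v k ω‖ ≤ B)
    (hg : ∀ᵐ ω ∂μ, Tendsto (v · ω) atTop (𝓝 (g ω)))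
    (h : ∀ s ∈ insert Set.univ C, Tendsto (fun k => ∫ ω in s, (f ω - v k ω) ∂μ) atTop (𝓝 0)) :
    g =ᵐ[μ] μ[f | m] := by
  have hgm : AEStronglyMeasurable[m] g μ :=
    ⟨fun ω => limsup (v · ω) atTop, (Measurable.limsup hv).stronglyMeasurable,
      hg.mono fun ω hω => hω.limsup_eq.symm⟩
  have hgint : Integrable g μ := .of_bound (hgm.mono hm) B
    (hg.mono fun ω hω => le_of_tendsto' hω.norm fun k => hB k ω)
  have hset (s : Set Ω) (hs : s ∈ insert Set.univ C) : ∫ ω in s, g ω ∂μ = ∫ ω in s, f ω ∂μ := by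
    have hlim : Tendsto (fun k => ∫ ω in s, (f ω - v k ω) ∂μ) atTop
        (𝓝 (∫ ω in s, (f ω - g ω) ∂μ)) := by
      refine tendsto_integral_of_dominated_convergence (fun ω => ‖f ω‖ + B) (fun k => ?_)
        (hf.norm.integrableOn.add (integrable_const B)) (fun k => ?_) (ae_restrict_of_ae ?_)
      · exact hf.aestronglyMeasurable.restrict.sub ((hv k).mono hm le_rfl).aestronglyMeasurable
      · exact .of_forall fun ω => (norm_sub_le _ _).trans (by gcongr; exact hB k ω)
      · exact hg.mono fun ω hω => hω.const_sub (f ω)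
    have hzero := tendsto_nhds_unique hlim (h s hs)
    rw [integral_sub hf.integrableOn hgint.integrableOn, sub_eq_zero] at hzero
    exact hzero.symm
  exact ae_eq_condExp_of_isPiSystem hm hC hpi hf hgint hgm
    (by simpa using hset Set.univ (Set.mem_insert _ _)) fun s hs => hset s (.inr hs)

end CondExp

section Cylinders

variable {E : Type*}

lemma mem_cylSetL_iff_of_mem {m : ℤ} {es : List (Option E)} {σ τ : CodeSpace E}
    (hσ : σ ∈ cylSetL m es) :
    τ ∈ cylSetL m es ↔ ∀ j ∈ Set.Ico m (m + es.length), τ j = σ j := by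
  refine ⟨fun hτ j hj => ?_, fun h k hk => ?_⟩
  · obtain ⟨k, rfl⟩ : ∃ k : ℕ, m + k = j := ⟨(j - m).toNat, by have := hj.1; omega⟩
    have hk : k < es.length := by have := hj.2; omega
    rw [hτ k hk, hσ k hk]
  · rw [h _ ⟨by omega, by omega⟩, hσ k hk]

lemma dependsOn_mem_cylSetL (m : ℤ) (es : List (Option E)) :
    DependsOn (· ∈ cylSetL m es) (Set.Ico m (m + es.length)) := by
  intro σ τ h
  refine propext ⟨fun hσ => ?_, fun hτ => ?_⟩
  · exact (mem_cylSetL_iff_of_mem hσ).2 fun j hj => (h j hj).symm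
  · exact (mem_cylSetL_iff_of_mem hτ).2 h

lemma isPiSystem_past_cylSetL : IsPiSystem {A : Set (CodeSpace E) |
    ∃ es : List (Option E), es ≠ [] ∧ A = cylSetL (1 - (es.length : ℤ)) es} := by
  have hnested (es es' : List (Option E)) (hlen : es.length ≤ es'.length)
      (h : (cylSetL (1 - (es.length : ℤ)) es ∩ cylSetL (1 - (es'.length : ℤ)) es').Nonempty) :
      cylSetL (1 - (es'.length : ℤ)) es' ⊆ cylSetL (1 - (es.length : ℤ)) es := by
    obtain ⟨σ, hσ, hσ'⟩ := h
    intro τ hτ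
    refine (mem_cylSetL_iff_of_mem hσ).2 fun j hj => ?_
    exact (mem_cylSetL_iff_of_mem hσ').1 hτ j ⟨by have := hj.1; omega, by have := hj.2; omega⟩
  rintro _ ⟨es, hes, rfl⟩ _ ⟨es', hes', rfl⟩ h
  rcases le_total es.length es'.length with hlen | hlen
  · exact ⟨es', hes', Set.inter_eq_right.2 (hnested es es' hlen h)⟩
  · exact ⟨es, hes, Set.inter_eq_left.2 (hnested es' es hlen (Set.inter_comm _ _ ▸ h))⟩

lemma pastAlgebra_le : pastAlgebra E ≤ MeasurableSpace.pi := by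
  refine MeasurableSpace.generateFrom_le ?_
  rintro _ ⟨es, -, rfl⟩
  have hset : cylSetL (1 - (es.length : ℤ)) es =
      ⋂ (k : ℕ) (h : k < es.length),
        (fun σ => σ (1 - (es.length : ℤ) + k)) ⁻¹' {es.get ⟨k, h⟩} := by
    ext σ
    simp [cylSetL]
  rw [hset]
  exact .iInter fun k => .iInter fun _ => measurable_pi_apply _ MeasurableSpace.measurableSet_top

lemma measurable_pastAlgebra_of_dependsOn [Countable E] {X : Type*} [MeasurableSpace X]
    {f : CodeSpace E → X} {n : ℕ} (hf : DependsOn f (Set.Icc (-n : ℤ) 0)) :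
    Measurable[pastAlgebra E] f := by
  intro B _
  have hset : f ⁻¹' B = ⋃ es ∈ {es : List (Option E) | es.length = n + 1 ∧
      cylSetL (1 - (es.length : ℤ)) es ⊆ f ⁻¹' B}, cylSetL (1 - (es.length : ℤ)) es := by
    refine Set.Subset.antisymm (fun σ hσ => ?_) (Set.iUnion₂_subset fun es hes => hes.2)
    let es := List.ofFn fun k : Fin (n + 1) => σ (1 - ((n + 1 : ℕ) : ℤ) + k)
    have hσes : σ ∈ cylSetL (1 - (es.length : ℤ)) es := fun k hk => by
      simp only [es, List.length_ofFn, List.get_ofFn, Fin.val_cast]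
    refine Set.mem_biUnion ⟨List.length_ofFn, fun τ hτ => ?_⟩ hσes
    have hagree := (mem_cylSetL_iff_of_mem hσes).1 hτ
    rw [List.length_ofFn] at hagree
    have : f τ = f σ := hf fun j hj => hagree j
      ⟨by have := hj.1; push_cast; omega, by have := hj.2; push_cast; omega⟩
    simpa only [Set.mem_preimage, this] using hσ
  rw [hset]
  refine MeasurableSet.biUnion (Set.to_countable _) fun es hes =>
    MeasurableSpace.measurableSet_generateFrom ⟨es, ?_, rfl⟩
  exact List.ne_nil_of_length_pos (by have := hes.1; omega)

end Cylinders

namespace MarkovSystem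

variable {K : Type*} [MetricSpace K] [MeasurableSpace K] {N E : Type*}

local instance listMeasurableSpace {E : Type*} : MeasurableSpace (List E) := ⊤

section Chain

variable (M : MarkovSystem K N E)

lemma exists_mem_Kset (x : K) : ∃ j, x ∈ M.Kset j :=
  Set.mem_iUnion.1 (M.Kset_cover ▸ Set.mem_univ x)

variable {M} in
lemma eq_of_mem_Kset {x : K} {j j' : N} (h : x ∈ M.Kset j) (h' : x ∈ M.Kset j') : j = j' := by
  by_contra hne
  exact Set.disjoint_left.1 (M.Kset_disjoint hne) h h'

variable {M} in
lemma mem_Kset_of_p_ne_zero {e : E} {x : K} (h : M.p e x ≠ 0) : x ∈ M.Kset (M.i e) :=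
  not_imp_comm.1 (M.p_zero_outside e x) h

lemma norm_p_le_one (e : E) (x : K) : ‖M.p e x‖ ≤ 1 := by
  rw [Real.norm_of_nonneg (M.p_nonneg e x)]
  exact M.p_le_one e x

lemma tsum_p_mul_eq {x : K} {j : N} (hx : x ∈ M.Kset j) (f : E → ℝ≥0∞) :
    ∑' e, ENNReal.ofReal (M.p e x) * f e =
      ∑' e : {e : E // M.i e = j}, ENNReal.ofReal (M.p e x) * f e := by
  refine (tsum_subtype_eq_of_support_subset (s := {e | M.i e = j}) fun e he => ?_).symm
  exact eq_of_mem_Kset (mem_Kset_of_p_ne_zero fun h0 => he (by simp [h0])) hx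

lemma tsum_p_mul_mono {x : K} {f g : E → ℝ≥0∞} (h : ∀ e, x ∈ M.Kset (M.i e) → f e ≤ g e) :
    ∑' e, ENNReal.ofReal (M.p e x) * f e ≤ ∑' e, ENNReal.ofReal (M.p e x) * g e := by
  refine ENNReal.tsum_le_tsum fun e => ?_
  rcases eq_or_ne (M.p e x) 0 with hp | hp
  · simp [hp]
  · gcongr
    exact h e (mem_Kset_of_p_ne_zero hp)

lemma tsum_p (x : K) : ∑' e, ENNReal.ofReal (M.p e x) = 1 := by
  obtain ⟨j, hx⟩ := M.exists_mem_Kset x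
  have hsummable : Summable fun e : {e : E // M.i e = j} => M.p e x :=
    by_contra fun hns => by simpa [tsum_eq_zero_of_not_summable hns] using M.p_tsum_one j x hx
  have h := M.tsum_p_mul_eq hx 1
  simp only [Pi.one_apply, mul_one] at h
  rw [h, ← ENNReal.ofReal_tsum_of_nonneg (fun e => M.p_nonneg _ _) hsummable,
    M.p_tsum_one j x hx, ENNReal.ofReal_one]

/-- The position `w_{e_n} ∘ ⋯ ∘ w_{e_1} (x₀)` reached from `x₀` along a history, which lists the
edges travelled with the newest edge `e_n` first. -/
def pos (x₀ : K) : List E → K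
  | [] => x₀
  | e :: h => M.w e (pos x₀ h)

/-- The transition law of the history of the chain started at `x₀`: the edge `e` is travelled next
with probability `p_e` at the current position. -/
def stepLaw (x₀ : K) (h : List E) : Measure (List E) :=
  Measure.sum fun e => ENNReal.ofReal (M.p e (M.pos x₀ h)) • Measure.dirac (e :: h)

/-- The law of the history of the first `n` steps of the chain started at `x₀`; all sets of
histories are taken to be measurable. -/
def pathLaw (x₀ : K) : ℕ → Measure (List E)
  | 0 => Measure.dirac []
  | n + 1 => (pathLaw x₀ n).bind (M.stepLaw x₀)

variable (x₀ : K)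

lemma lintegral_pathLaw_zero (f : List E → ℝ≥0∞) : ∫⁻ h, f h ∂(M.pathLaw x₀ 0) = f [] :=
  lintegral_dirac' _ measurable_from_top

lemma lintegral_pathLaw_succ (n : ℕ) (f : List E → ℝ≥0∞) :
    ∫⁻ l, f l ∂(M.pathLaw x₀ (n + 1)) =
      ∫⁻ h, ∑' e, ENNReal.ofReal (M.p e (M.pos x₀ h)) * f (e :: h) ∂(M.pathLaw x₀ n) := by
  rw [pathLaw, Measure.lintegral_bind measurable_from_top.aemeasurable
    measurable_from_top.aemeasurable]
  simp only [stepLaw, lintegral_sum_measure, lintegral_smul_measure,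
    lintegral_dirac' _ measurable_from_top, smul_eq_mul]

instance isProbabilityMeasure_pathLaw (n : ℕ) : IsProbabilityMeasure (M.pathLaw x₀ n) := by
  induction n with
  | zero => exact Measure.dirac.isProbabilityMeasure
  | succ n ih => exact ⟨by simpa [tsum_p] using M.lintegral_pathLaw_succ x₀ n 1⟩

lemma lintegral_pos_pathLaw_succ (n : ℕ) (f : K → ℝ≥0∞) :
    ∫⁻ l, f (M.pos x₀ l) ∂(M.pathLaw x₀ (n + 1)) =
      ∫⁻ h, M.markovOp f (M.pos x₀ h) ∂(M.pathLaw x₀ n) :=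
  M.lintegral_pathLaw_succ x₀ n fun l => f (M.pos x₀ l)

lemma ae_pathLaw_succ (n : ℕ) {P : List E → Prop}
    (hP : ∀ᵐ h ∂(M.pathLaw x₀ n), ∀ e, M.pos x₀ h ∈ M.Kset (M.i e) → P (e :: h)) :
    ∀ᵐ l ∂(M.pathLaw x₀ (n + 1)), P l := by
  rw [ae_iff, ← lintegral_indicator_one MeasurableSpace.measurableSet_top, lintegral_pathLaw_succ,
    lintegral_eq_zero_iff measurable_from_top]
  filter_upwards [hP] with h hh
  have hle := M.tsum_p_mul_mono (x := M.pos x₀ h)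
    (f := fun e => {l | ¬P l}.indicator 1 (e :: h)) (g := 0) fun e he => by simp [hh e he]
  simpa using hle

lemma map_tail_pathLaw (n : ℕ) : (M.pathLaw x₀ (n + 1)).map List.tail = M.pathLaw x₀ n := by
  refine Measure.ext_of_lintegral _ fun f _ => ?_
  rw [lintegral_map measurable_from_top measurable_from_top, lintegral_pathLaw_succ]
  simp [ENNReal.tsum_mul_right, tsum_p]

lemma map_drop_pathLaw (n k : ℕ) :
    (M.pathLaw x₀ (n + k)).map (List.drop k) = M.pathLaw x₀ n := by
  induction k with
  | zero => exact Measure.map_id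
  | succ k ih =>
    rw [← ih, ← M.map_tail_pathLaw x₀ (n + k), Measure.map_map measurable_from_top
      measurable_from_top, ← add_assoc]
    congr 1
    ext1 l
    simp [List.drop_tail]

lemma pathLaw_succ_image_cons (n : ℕ) (e : E) (A : Set (List E)) :
    M.pathLaw x₀ (n + 1) ((e :: ·) '' A) =
      ∫⁻ h in A, ENNReal.ofReal (M.p e (M.pos x₀ h)) ∂(M.pathLaw x₀ n) := by
  rw [← lintegral_indicator_one MeasurableSpace.measurableSet_top, lintegral_pathLaw_succ,
    ← lintegral_indicator MeasurableSpace.measurableSet_top]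
  refine lintegral_congr fun h => ?_
  rw [tsum_eq_single e fun e' he' => by simp [he'.symm]]
  by_cases hA : h ∈ A <;> simp [hA]

lemma integrable_pathLaw (n : ℕ) {f : List E → ℝ} {B : ℝ}
    (hf : ∀ h, ‖f h‖ ≤ B) : Integrable f (M.pathLaw x₀ n) :=
  .of_bound measurable_from_top.aestronglyMeasurable B (.of_forall hf)

lemma integral_pathLaw_succ_indicator_image_cons (n : ℕ) (e : E)
    (A : Set (List E)) :
    ∫ l, ((e :: ·) '' A).indicator (fun _ => (1 : ℝ)) l ∂(M.pathLaw x₀ (n + 1)) =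
      ∫ h in A, M.p e (M.pos x₀ h) ∂(M.pathLaw x₀ n) := by
  rw [integral_indicator_const _ MeasurableSpace.measurableSet_top, measureReal_def, smul_eq_mul,
    mul_one, pathLaw_succ_image_cons, integral_eq_lintegral_of_nonneg_ae
      (.of_forall fun h => M.p_nonneg e _) measurable_from_top.aestronglyMeasurable]

lemma integral_comp_tail_pathLaw (n : ℕ) (f : List E → ℝ) :
    ∫ l, f l.tail ∂(M.pathLaw x₀ (n + 1)) = ∫ h, f h ∂(M.pathLaw x₀ n) := by
  rw [← M.map_tail_pathLaw x₀ n,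
    integral_map measurable_from_top.aemeasurable measurable_from_top.aestronglyMeasurable]

lemma enorm_integral_pathLaw_succ_sub_le (n : ℕ) (e : E)
    (A : Set (List E)) {v : List E → ℝ} {B : ℝ} (hv : ∀ h, ‖v h‖ ≤ B) :
    ‖∫ l, (((e :: ·) '' A).indicator (fun _ => 1) l - A.indicator v l.tail)
        ∂(M.pathLaw x₀ (n + 1))‖ₑ ≤
      ∫⁻ h, edist (M.p e (M.pos x₀ h)) (v h) ∂(M.pathLaw x₀ n) := by
  have hind (l : List E) : ‖((e :: ·) '' A).indicator (fun _ => (1 : ℝ)) l‖ ≤ 1 :=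
    (norm_indicator_le_norm_self _ l).trans norm_one.le
  have htail (l : List E) : ‖A.indicator v l.tail‖ ≤ B :=
    (norm_indicator_le_norm_self _ _).trans (hv _)
  have hp := M.integrable_pathLaw x₀ n fun h => M.norm_p_le_one e (M.pos x₀ h)
  rw [integral_sub (M.integrable_pathLaw x₀ _ hind) (M.integrable_pathLaw x₀ _ htail),
    integral_pathLaw_succ_indicator_image_cons, M.integral_comp_tail_pathLaw x₀ n (A.indicator v),
    integral_indicator MeasurableSpace.measurableSet_top,
    ← integral_sub hp.integrableOn (M.integrable_pathLaw x₀ n hv).integrableOn]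
  calc _ ≤ ∫⁻ h in A, ‖M.p e (M.pos x₀ h) - v h‖ₑ ∂(M.pathLaw x₀ n) :=
        enorm_integral_le_lintegral_enorm _
    _ ≤ ∫⁻ h, edist (M.p e (M.pos x₀ h)) (v h) ∂(M.pathLaw x₀ n) := by
        simp only [edist_eq_enorm_sub]
        exact setLIntegral_le_lintegral _ _

end Chain

section Contraction

variable {M : MarkovSystem K N E}
  {a : ℝ} {xp : N → K}

lemma IsContractive.tsum_p_mul_edist_le (hcon : M.IsContractive a) {j : N} {x y : K}
    (hx : x ∈ M.Kset j) (hy : y ∈ M.Kset j) :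
    ∑' e, ENNReal.ofReal (M.p e x) * edist (M.w e x) (M.w e y) ≤
      ENNReal.ofReal a * edist x y := by
  rw [M.tsum_p_mul_eq hx, edist_dist x, ← ENNReal.ofReal_mul' dist_nonneg]
  simpa only [edist_dist, ← ENNReal.ofReal_mul (M.p_nonneg _ _)] using hcon j x hx y hy

lemma tsum_p_mul_edist_le_bConst (M : MarkovSystem K N E) (xp : N → K) (x : K) :
    ∑' e, ENNReal.ofReal (M.p e x) * edist (M.w e (xp (M.i e))) (xp (M.t e)) ≤ M.bConst xp := by
  obtain ⟨j, hx⟩ := M.exists_mem_Kset x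
  rw [M.tsum_p_mul_eq hx]
  simp only [edist_dist, ← ENNReal.ofReal_mul (M.p_nonneg _ _)]
  exact le_iSup_of_le j (le_iSup₂_of_le x hx le_rfl)

lemma Lfun_eq_edist (xp : N → K) {x : K} {j : N} (hx : x ∈ M.Kset j) :
    M.Lfun xp x = edist x (xp j) := by
  have hsingle : ∀ j' ≠ j,
      (M.Kset j').indicator (fun y => ENNReal.ofReal (dist y (xp j'))) x = 0 := fun j' hj' =>
    Set.indicator_of_notMem (fun h => hj' (eq_of_mem_Kset h hx)) _
  rw [Lfun, tsum_eq_single j hsingle, Set.indicator_of_mem hx, edist_dist]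

lemma IsContractive.markovOp_Lfun_le (hcon : M.IsContractive a) (hxp : ∀ j, xp j ∈ M.Kset j)
    (x : K) :
    M.markovOp (M.Lfun xp) x ≤ ENNReal.ofReal a * M.Lfun xp x + M.bConst xp := by
  obtain ⟨j, hx⟩ := M.exists_mem_Kset x
  calc M.markovOp (M.Lfun xp) x
      ≤ ∑' e, ENNReal.ofReal (M.p e x) *
          (edist (M.w e x) (M.w e (xp j)) + edist (M.w e (xp (M.i e))) (xp (M.t e))) := by
        refine M.tsum_p_mul_mono fun e he => ?_
        obtain rfl := eq_of_mem_Kset he hx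
        rw [Lfun_eq_edist xp (M.w_mapsTo e he)]
        exact edist_triangle _ _ _
    _ = ∑' e, ENNReal.ofReal (M.p e x) * edist (M.w e x) (M.w e (xp j)) +
          ∑' e, ENNReal.ofReal (M.p e x) * edist (M.w e (xp (M.i e))) (xp (M.t e)) := by
        simp only [mul_add, ENNReal.tsum_add]
    _ ≤ ENNReal.ofReal a * M.Lfun xp x + M.bConst xp := by
        rw [Lfun_eq_edist xp hx]
        exact add_le_add (hcon.tsum_p_mul_edist_le hx (hxp j)) (M.tsum_p_mul_edist_le_bConst xp x)

lemma IsContractive.exists_lintegral_Lfun_pos_le (hcon : M.IsContractive a)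
    (hxp : ∀ j, xp j ∈ M.Kset j) (ha1 : a < 1) (hb : M.bConst xp ≠ ⊤) (x₀ : K) :
    ∃ D : ℝ≥0∞, D ≠ ⊤ ∧ ∀ n, ∫⁻ h, M.Lfun xp (M.pos x₀ h) ∂(M.pathLaw x₀ n) ≤ D := by
  have ha1' : ENNReal.ofReal a < 1 := ENNReal.ofReal_lt_one.2 ha1
  have hstep (n : ℕ) : ∫⁻ h, M.Lfun xp (M.pos x₀ h) ∂(M.pathLaw x₀ (n + 1)) ≤
      ENNReal.ofReal a * ∫⁻ h, M.Lfun xp (M.pos x₀ h) ∂(M.pathLaw x₀ n) + M.bConst xp := by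
    rw [lintegral_pos_pathLaw_succ]
    calc ∫⁻ h, M.markovOp (M.Lfun xp) (M.pos x₀ h) ∂(M.pathLaw x₀ n)
        ≤ ∫⁻ h, ENNReal.ofReal a * M.Lfun xp (M.pos x₀ h) + M.bConst xp ∂(M.pathLaw x₀ n) :=
          lintegral_mono fun h => hcon.markovOp_Lfun_le hxp _
      _ = _ := by
          rw [lintegral_add_right _ measurable_const, lintegral_const_mul _ measurable_from_top,
            lintegral_const, measure_univ, mul_one]
  refine ⟨_, ?_, le_add_mul_inv_of_le_mul_add ha1' hstep⟩
  obtain ⟨j, hx₀⟩ := M.exists_mem_Kset x₀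
  rw [lintegral_pathLaw_zero, pos, Lfun_eq_edist xp hx₀]
  exact ENNReal.add_ne_top.2 ⟨edist_ne_top _ _,
    ENNReal.mul_ne_top hb (ENNReal.inv_ne_top.2 (tsub_pos_of_lt ha1').ne')⟩

lemma IsUniformlyContinuous.exists_edist_p_le (huc : M.IsUniformlyContinuous) (e : E) {ε : ℝ≥0}
    (hε : 0 < ε) :
    ∃ C : ℝ≥0, ∀ j, ∀ x ∈ M.Kset j, ∀ y ∈ M.Kset j,
      edist (M.p e x) (M.p e y) ≤ ε + C * edist x y := by
  have hbounded (x : K) (_ : x ∈ M.Kset (M.i e)) (y : K) (_ : y ∈ M.Kset (M.i e)) :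
      nndist (M.p e x) (M.p e y) ≤ 1 := by
    rw [← NNReal.coe_le_coe, coe_nndist, NNReal.coe_one, Real.dist_eq, abs_sub_le_iff]
    exact ⟨by linarith [M.p_le_one e x, M.p_nonneg e y],
      by linarith [M.p_le_one e y, M.p_nonneg e x]⟩
  obtain ⟨C, hC⟩ := exists_nndist_le_add_mul_of_uniformContinuousOn (huc e).2 hbounded hε
  refine ⟨C, fun j x hx y hy => ?_⟩
  by_cases hj : M.i e = j
  · subst hj
    simpa only [edist_nndist] using mod_cast hC x hx y hy
  · rw [M.p_zero_outside e x fun h => hj (eq_of_mem_Kset h hx),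
      M.p_zero_outside e y fun h => hj (eq_of_mem_Kset h hy), edist_self]
    exact zero_le

end Contraction

section Orbit

variable (M : MarkovSystem K N E)
  (j0 : N) (xp : N → K)

lemma iterW_succ (σ : CodeSpace E) (n : ℕ) (y : K) :
    M.iterW σ (n + 1) y = M.wext (σ 0) (M.iterW (fun k => σ (k - 1)) n y) := by
  induction n generalizing y with
  | zero => simp [iterW]
  | succ n ih =>
    rw [iterW, ih, iterW]
    congr 4

lemma orbit_zero (σ : CodeSpace E) :
    M.orbit j0 xp σ 0 = M.wext (σ 0) (xp (M.iext j0 (σ 0))) := by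
  simp [orbit, iterW]

lemma orbit_succ (σ : CodeSpace E) (n : ℕ) :
    M.orbit j0 xp σ (n + 1) = M.wext (σ 0) (M.orbit j0 xp (fun k => σ (k - 1)) n) := by
  rw [orbit, iterW_succ, orbit]
  congr 5
  push_cast
  ring

lemma dependsOn_orbit (n : ℕ) :
    DependsOn (fun σ => M.orbit j0 xp σ n) (Set.Icc (-(n : ℤ)) 0) := by
  induction n with
  | zero =>
    intro σ τ h
    simp only [orbit_zero]
    rw [h 0 (by simp)]
  | succ n ih =>
    intro σ τ h
    simp only [orbit_succ]
    rw [h 0 (by simp)]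
    refine congrArg _ (ih fun k hk => h _ ⟨?_, ?_⟩)
    · have := hk.1
      push_cast
      omega
    · have := hk.2
      omega

lemma dependsOn_min_one_edist_orbit (m : ℕ) :
    DependsOn (fun σ => min 1 (edist (M.orbit j0 xp σ m) (M.orbit j0 xp σ (m + 1))))
      (Set.Icc (-(m + 1 : ℕ) : ℤ) 0) := by
  intro σ τ h
  have hm : M.orbit j0 xp σ m = M.orbit j0 xp τ m :=
    M.dependsOn_orbit j0 xp m fun j hj => h j ⟨by have := hj.1; push_cast; omega, hj.2⟩
  simp only [hm, show M.orbit j0 xp σ (m + 1) = _ from M.dependsOn_orbit j0 xp (m + 1) h]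

variable {M xp} in
lemma orbit_mem_Kset (hxp : ∀ j, xp j ∈ M.Kset j) {σ : CodeSpace E} (hσ : σ ∈ M.pathSpace) {e : E}
    (he : σ 0 = some e) (n : ℕ) : M.orbit j0 xp σ n ∈ M.Kset (M.t e) := by
  induction n generalizing σ e with
  | zero =>
    rw [orbit_zero, he]
    exact M.w_mapsTo e (hxp _)
  | succ n ih =>
    rw [orbit_succ, he]
    obtain ⟨e₁, e₂, h₁, h₂, h₁₂⟩ := hσ (-1)
    obtain rfl : e₂ = e := Option.some_injective _ (h₂.symm.trans he)
    have hshift : (fun k => σ (k - 1)) ∈ M.pathSpace := fun k => by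
      simpa only [sub_add_cancel, add_sub_cancel_right] using hσ (k - 1)
    exact M.w_mapsTo e₂ (h₁₂ ▸ ih hshift h₁)

/-- The code whose coordinates at the times `k, k - 1, …` are the edges of the history `h`, newest
first, and whose remaining coordinates are `∞`; it turns histories of the chain into points of the
code space. -/
def historyCode (k : ℤ) (h : List E) : CodeSpace E := fun j =>
  if j ≤ k then h[(k - j).toNat]? else none

lemma historyCode_add (k : ℤ) (h : List E) (j r : ℤ) :
    historyCode k h (j + r) = historyCode (k - r) h j := by
  simp only [historyCode, le_sub_iff_add_le, sub_sub, add_comm r]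

lemma historyCode_drop {j k : ℤ} (hj : j ≤ k) (h : List E) (r : ℕ) :
    historyCode k (h.drop r) j = historyCode (k + r) h j := by
  rw [historyCode, historyCode, if_pos hj, if_pos (by omega), List.getElem?_drop]
  congr 1
  omega

lemma historyCode_tail {j k : ℤ} (hj : j ≤ k) (h : List E) :
    historyCode k h.tail j = historyCode (k + 1) h j := by
  simpa only [List.drop_one, Nat.cast_one] using historyCode_drop hj h 1

lemma historyCode_cons_self (k : ℤ) (e : E) (h : List E) :
    historyCode k (e :: h) k = some e := by
  simp [historyCode]

lemma historyCode_cons_of_le {j k : ℤ} (hj : j ≤ k) (e : E) (h : List E) :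
    historyCode (k + 1) (e :: h) j = historyCode k h j :=
  (historyCode_tail hj (e :: h)).symm

lemma mem_image_cons_preimage_historyCode {A : Set (CodeSpace E)}
    (hA : DependsOn (· ∈ A) (Set.Iic (0 : ℤ))) (e : E) (l : List E) :
    l ∈ (e :: ·) '' (historyCode 0 ⁻¹' A) ↔ historyCode 1 l ∈ A ∧ historyCode 1 l 1 = some e := by
  have htail : (historyCode 1 l ∈ A) = (historyCode 0 l.tail ∈ A) :=
    hA fun j hj => (historyCode_tail hj l).symm
  rw [htail]
  cases l with
  | nil => simp [historyCode]
  | cons e' h => simp [historyCode_cons_self, eq_comm, and_comm]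

lemma orbit_historyCode_cons_zero (e : E) (h : List E) :
    M.orbit j0 xp (historyCode 0 (e :: h)) 0 = M.w e (xp (M.i e)) := by
  rw [orbit_zero, historyCode_cons_self]
  rfl

lemma orbit_historyCode_cons_succ (e : E) (h : List E) (m : ℕ) :
    M.orbit j0 xp (historyCode 0 (e :: h)) (m + 1) =
      M.w e (M.orbit j0 xp (historyCode 0 h) m) := by
  rw [orbit_succ, historyCode_cons_self]
  refine congrArg (M.w e) (M.dependsOn_orbit j0 xp m fun j hj => ?_)
  rw [sub_eq_add_neg, historyCode_add]
  exact historyCode_cons_of_le hj.2 e h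

variable {M j0 xp}

lemma ae_exists_pos_mem_orbit_mem (hxp : ∀ j, xp j ∈ M.Kset j) (x₀ : K) {m n : ℕ} (hmn : m < n) :
    ∀ᵐ h ∂(M.pathLaw x₀ n),
      ∃ j, M.pos x₀ h ∈ M.Kset j ∧ M.orbit j0 xp (historyCode 0 h) m ∈ M.Kset j := by
  induction m generalizing n with
  | zero =>
    obtain ⟨n, rfl⟩ := Nat.exists_eq_add_of_lt hmn
    refine M.ae_pathLaw_succ x₀ _ (.of_forall fun h e he => ⟨M.t e, M.w_mapsTo e he, ?_⟩)
    rw [orbit_historyCode_cons_zero]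
    exact M.w_mapsTo e (hxp _)
  | succ m ih =>
    obtain ⟨n, rfl⟩ := Nat.exists_eq_add_one_of_ne_zero (Nat.ne_zero_of_lt hmn)
    refine M.ae_pathLaw_succ x₀ n ?_
    filter_upwards [ih (Nat.lt_of_succ_lt_succ hmn)] with h hh e he
    obtain ⟨j, hpos, horbit⟩ := hh
    obtain rfl := eq_of_mem_Kset he hpos
    refine ⟨M.t e, M.w_mapsTo e he, ?_⟩
    rw [orbit_historyCode_cons_succ]
    exact M.w_mapsTo e horbit

lemma IsContractive.lintegral_edist_pos_orbit_le (hcon : M.IsContractive a)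
    (hxp : ∀ j, xp j ∈ M.Kset j) {x₀ : K} {D : ℝ≥0∞}
    (hD : ∀ n, ∫⁻ h, M.Lfun xp (M.pos x₀ h) ∂(M.pathLaw x₀ n) ≤ D) {m n : ℕ} (hmn : m < n) :
    ∫⁻ h, edist (M.pos x₀ h) (M.orbit j0 xp (historyCode 0 h) m) ∂(M.pathLaw x₀ n) ≤
      ENNReal.ofReal a ^ (m + 1) * D := by
  obtain ⟨n, rfl⟩ := Nat.exists_eq_add_one_of_ne_zero (Nat.ne_zero_of_lt hmn)
  rw [lintegral_pathLaw_succ]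
  induction m generalizing n with
  | zero =>
    calc _ ≤ ∫⁻ h, ENNReal.ofReal a * M.Lfun xp (M.pos x₀ h) ∂(M.pathLaw x₀ n) := by
          refine lintegral_mono fun h => ?_
          obtain ⟨j, hj⟩ := M.exists_mem_Kset (M.pos x₀ h)
          rw [Lfun_eq_edist xp hj]
          refine le_trans (M.tsum_p_mul_mono fun e he => ?_) (hcon.tsum_p_mul_edist_le hj (hxp j))
          rw [orbit_historyCode_cons_zero, eq_of_mem_Kset he hj, pos]
      _ ≤ ENNReal.ofReal a ^ (0 + 1) * D := by
          rw [lintegral_const_mul _ measurable_from_top, zero_add, pow_one]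
          gcongr
          exact hD n
  | succ m ih =>
    have hmn' : m < n := Nat.lt_of_succ_lt_succ hmn
    calc _ ≤ ∫⁻ h, ENNReal.ofReal a * edist (M.pos x₀ h) (M.orbit j0 xp (historyCode 0 h) m)
            ∂(M.pathLaw x₀ n) := by
          refine lintegral_mono_ae ?_
          filter_upwards [ae_exists_pos_mem_orbit_mem (j0 := j0) hxp x₀ hmn'] with h hh
          obtain ⟨j, hpos, horbit⟩ := hh
          simpa only [pos, orbit_historyCode_cons_succ] using hcon.tsum_p_mul_edist_le hpos horbit
      _ ≤ ENNReal.ofReal a * (ENNReal.ofReal a ^ (m + 1) * D) := by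
          rw [lintegral_const_mul _ measurable_from_top]
          gcongr
          obtain ⟨n, rfl⟩ := Nat.exists_eq_add_one_of_ne_zero (Nat.ne_zero_of_lt hmn')
          rw [lintegral_pathLaw_succ]
          exact ih n hmn'
      _ = ENNReal.ofReal a ^ (m + 1 + 1) * D := by ring

lemma IsContractive.exists_lintegral_edist_p_le (hcon : M.IsContractive a)
    (huc : M.IsUniformlyContinuous) (hxp : ∀ j, xp j ∈ M.Kset j) {x₀ : K} {D : ℝ≥0∞}
    (hD : ∀ n, ∫⁻ h, M.Lfun xp (M.pos x₀ h) ∂(M.pathLaw x₀ n) ≤ D) (e : E) {ε : ℝ≥0}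
    (hε : 0 < ε) :
    ∃ C : ℝ≥0, ∀ m n, m < n →
      ∫⁻ h, edist (M.p e (M.pos x₀ h)) (M.p e (M.orbit j0 xp (historyCode 0 h) m))
        ∂(M.pathLaw x₀ n) ≤ ε + C * (ENNReal.ofReal a ^ (m + 1) * D) := by
  obtain ⟨C, hC⟩ := huc.exists_edist_p_le e hε
  refine ⟨C, fun m n hmn => ?_⟩
  calc _ ≤ ∫⁻ h, ε + C * edist (M.pos x₀ h) (M.orbit j0 xp (historyCode 0 h) m)
          ∂(M.pathLaw x₀ n) := by
        refine lintegral_mono_ae ?_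
        filter_upwards [ae_exists_pos_mem_orbit_mem (j0 := j0) hxp x₀ hmn] with h hh
        obtain ⟨j, hpos, horbit⟩ := hh
        exact hC j _ hpos _ horbit
    _ ≤ ε + C * (ENNReal.ofReal a ^ (m + 1) * D) := by
        rw [lintegral_add_left measurable_const, lintegral_const, measure_univ, mul_one,
          lintegral_const_mul _ measurable_from_top]
        gcongr
        exact hcon.lintegral_edist_pos_orbit_le hxp hD hmn

end Orbit

section Domination

variable (M : MarkovSystem K N E)

/-- The supremum of `p_e` over `K_{i(e)}`, the unnormalised weight of `e` in the dominating Markov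
chain. -/
def supP (e : E) : ℝ≥0∞ := ⨆ y ∈ M.Kset (M.i e), ENNReal.ofReal (M.p e y)

lemma ofReal_p_le_supP (e : E) (x : K) : ENNReal.ofReal (M.p e x) ≤ M.supP e := by
  rcases eq_or_ne (M.p e x) 0 with hp | hp
  · simp [hp]
  · exact le_iSup₂_of_le (f := fun y _ => ENNReal.ofReal (M.p e y)) x
      (mem_Kset_of_p_ne_zero hp) le_rfl

lemma xi_eq_tsum_supP (j : N) : M.xi j = ∑' e : M.i ⁻¹' {j}, M.supP e :=
  tsum_congr fun ⟨_, he⟩ => by rw [supP, he]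

lemma xiq_eq_tsum_supP (j j' : N) :
    M.xiq j j' = ∑' e : {e // M.i e = j ∧ M.t e = j'}, M.supP e :=
  tsum_congr fun ⟨_, he⟩ => by rw [supP, he.1]

lemma xi_le_cConst (j : N) : M.xi j ≤ M.cConst := by
  calc M.xi j = ∑' j', M.xiq j j' := by
        rw [xi_eq_tsum_supP, ← ENNReal.tsum_fiberwise _ fun e : M.i ⁻¹' {j} => M.t e]
        refine tsum_congr fun j' => ?_
        rw [xiq_eq_tsum_supP]
        exact (Equiv.subtypeSubtypeEquivSubtypeInter (M.i · = j) (M.t · = j')).tsum_eq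
          fun e => M.supP e
    _ ≤ M.cConst := ENNReal.tsum_le_tsum fun j' => le_iSup (M.xiq · j') j

lemma markovOp_p_le (e : E) (x : K) :
    M.markovOp (fun y => ENNReal.ofReal (M.p e y)) x ≤ (⨆ j, M.xiq j (M.i e)) * M.supP e := by
  obtain ⟨j, hx⟩ := M.exists_mem_Kset x
  have hsupport : Function.support (fun e' =>
      ENNReal.ofReal (M.p e' x) * ENNReal.ofReal (M.p e (M.w e' x))) ⊆
        {e' | M.i e' = j ∧ M.t e' = M.i e} := by
    intro e' he'
    have hi : x ∈ M.Kset (M.i e') := mem_Kset_of_p_ne_zero fun h0 => he' (by simp [h0])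
    have ht : M.w e' x ∈ M.Kset (M.i e) := mem_Kset_of_p_ne_zero fun h0 => he' (by simp [h0])
    exact ⟨eq_of_mem_Kset hi hx, eq_of_mem_Kset (M.w_mapsTo e' hi) ht⟩
  calc M.markovOp (fun y => ENNReal.ofReal (M.p e y)) x
      = ∑' e' : {e' | M.i e' = j ∧ M.t e' = M.i e},
          ENNReal.ofReal (M.p e' x) * ENNReal.ofReal (M.p e (M.w e' x)) :=
        (tsum_subtype_eq_of_support_subset hsupport).symm
    _ ≤ ∑' e' : {e' | M.i e' = j ∧ M.t e' = M.i e}, M.supP e' * M.supP e :=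
        ENNReal.tsum_le_tsum fun e' =>
          mul_le_mul' (M.ofReal_p_le_supP e' x) (M.ofReal_p_le_supP e _)
    _ = M.xiq j (M.i e) * M.supP e := by
        rw [ENNReal.tsum_mul_right, xiq_eq_tsum_supP]
        rfl
    _ ≤ (⨆ j, M.xiq j (M.i e)) * M.supP e := by
        gcongr
        exact le_iSup (M.xiq · (M.i e)) j

variable (x₀ : K)

/-- A bound for the probability that the chain started at `x₀` travels the edge `e` in any given
step: `p_e(x₀)` accounts for the first step, and in every later step the chain must first have
entered `K_{i(e)}`. -/
def edgeBound (e : E) : ℝ≥0∞ :=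
  ENNReal.ofReal (M.p e x₀) + (⨆ j, M.xiq j (M.i e)) * M.supP e

variable {M} in
lemma tsum_edgeBound_ne_top (hc : M.cConst ≠ ⊤) : ∑' e, M.edgeBound x₀ e ≠ ⊤ := by
  have hle : ∑' e, (⨆ j, M.xiq j (M.i e)) * M.supP e ≤ M.cConst * M.cConst := by
    calc ∑' e, (⨆ j, M.xiq j (M.i e)) * M.supP e
        = ∑' j', (⨆ j, M.xiq j j') * M.xi j' := by
          rw [← ENNReal.tsum_fiberwise _ M.i]
          refine tsum_congr fun j' => ?_
          rw [xi_eq_tsum_supP, ← ENNReal.tsum_mul_left]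
          exact tsum_congr fun ⟨_, he⟩ => by rw [he]
      _ ≤ ∑' j', (⨆ j, M.xiq j j') * M.cConst := by
          gcongr
          exact M.xi_le_cConst _
      _ = M.cConst * M.cConst := by rw [ENNReal.tsum_mul_right, cConst]
  simp only [edgeBound, ENNReal.tsum_add, tsum_p]
  exact ENNReal.add_ne_top.2
    ⟨ENNReal.one_ne_top, ne_top_of_le_ne_top (ENNReal.mul_ne_top hc hc) hle⟩

lemma pathLaw_getElem?_le (n r : ℕ) (e : E) :
    M.pathLaw x₀ n {h | h[r]? = some e} ≤ M.edgeBound x₀ e := by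
  induction r generalizing n with
  | zero =>
    have himage : {h : List E | h[0]? = some e} = (e :: ·) '' Set.univ := by
      ext h
      cases h <;> simp [eq_comm]
    rcases n with _ | _ | n
    · simp [pathLaw]
    · rw [himage, pathLaw_succ_image_cons, setLIntegral_univ, lintegral_pathLaw_zero]
      exact le_self_add
    · rw [himage, pathLaw_succ_image_cons, setLIntegral_univ,
        M.lintegral_pos_pathLaw_succ x₀ n fun y => ENNReal.ofReal (M.p e y)]
      calc _ ≤ ∫⁻ _, (⨆ j, M.xiq j (M.i e)) * M.supP e ∂(M.pathLaw x₀ n) :=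
            lintegral_mono fun h => M.markovOp_p_le e _
        _ ≤ M.edgeBound x₀ e := by
            rw [lintegral_const, measure_univ, mul_one]
            exact le_add_self
  | succ r ih =>
    cases n with
    | zero => simp [pathLaw]
    | succ n =>
      have htail : {h : List E | h[r + 1]? = some e} = List.tail ⁻¹' {h | h[r]? = some e} := by
        ext h
        simp
      rw [htail, ← Measure.map_apply measurable_from_top MeasurableSpace.measurableSet_top,
        map_tail_pathLaw]
      exact ih n

end Domination

section StationaryLimit

variable (M : MarkovSystem K N E)

lemma iterate_shiftMap_historyCode (k : ℕ) (l : ℤ) (h : List E) :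
    (shiftMap E)^[k] (historyCode l h) = historyCode (l - k) h := by
  induction k generalizing l with
  | zero => simp
  | succ k ih =>
    have hshift : shiftMap E (historyCode l h) = historyCode (l - 1) h :=
      funext fun j => historyCode_add l h j 1
    rw [Function.iterate_succ_apply, hshift, ih, sub_sub, Nat.cast_succ, add_comm 1 (k : ℤ)]

lemma pathLaw_historyCode_le (x₀ : K) (n : ℕ) (l j : ℤ) (o : Option E) :
    M.pathLaw x₀ n {h | historyCode l h j = o} ≤ o.elim 1 (M.edgeBound x₀) := by
  cases o with
  | none => exact prob_le_one
  | some e =>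
    refine (measure_mono fun h hh => ?_).trans (M.pathLaw_getElem?_le x₀ n (l - j).toNat e)
    by_contra hne
    simp_all [historyCode]

local instance optionTopologicalSpace : TopologicalSpace (Option E) := ⊥

local instance discreteTopology_option : DiscreteTopology (Option E) := ⟨rfl⟩

local instance borelSpace_option : BorelSpace (Option E) :=
  ⟨(borel_eq_top_of_discrete (α := Option E)).symm⟩

variable {M} in
lemma isTightMeasureSet_map_historyCode [Countable E] (hc : M.cConst ≠ ⊤) (x₀ : K) :
    IsTightMeasureSet
      (Set.range fun x : ℕ × ℤ => (M.pathLaw x₀ x.1).map (historyCode x.2)) := by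
  refine isTightMeasureSet_pi fun j =>
    isTightMeasureSet_of_singleton_le (θ := fun o => o.elim 1 (M.edgeBound x₀)) ?_ ?_
  · rw [← (Equiv.optionEquivSumPUnit.{0} E).symm.tsum_eq,
      ENNReal.summable.tsum_sum ENNReal.summable]
    simpa using tsum_edgeBound_ne_top x₀ hc
  · rintro _ ⟨_, ⟨⟨n, l⟩, rfl⟩, rfl⟩ o
    beta_reduce
    rw [Measure.map_map (measurable_pi_apply j) measurable_from_top,
      Measure.map_apply measurable_from_top MeasurableSpace.measurableSet_top]
    exact M.pathLaw_historyCode_le x₀ n l j o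

/-- A shift-invariant limit point of the time averages of the laws of the two-sided codes of the
chain started at `x₀`. The last field is the only trace of the limit procedure that is kept:
bounds on the mean of an observable of the coordinates `-m, …, 1` that hold from time `m + 1` on
persist in the limit. The code `historyCode 1 l` places the newest edge at time `1`. -/
structure IsStationaryLimit (x₀ : K) (Λ : Measure (CodeSpace E)) : Prop where
  isProbabilityMeasure : IsProbabilityMeasure Λ
  map_shiftMap : Λ.map (shiftMap E) = Λ
  enorm_integral_le : ∀ (m : ℕ) (g : CodeSpace E → ℝ) (B : ℝ) (c : ℝ≥0∞),
    DependsOn g (Set.Icc (-m : ℤ) 1) → (∀ σ, ‖g σ‖ ≤ B) →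
      (∀ n, m < n → ‖∫ l, g (historyCode 1 l) ∂(M.pathLaw x₀ (n + 1))‖ₑ ≤ c) →
        ‖∫ σ, g σ ∂Λ‖ₑ ≤ c

lemma continuous_shiftMap : Continuous (shiftMap E) :=
  continuous_pi fun k => continuous_apply (k + 1)

lemma integral_iterate_shiftMap_historyCode [Countable E] (x₀ : K) {m : ℤ} {g : CodeSpace E → ℝ}
    (hg : DependsOn g (Set.Icc m 1)) (k r : ℕ) :
    ∫ σ, g ((shiftMap E)^[k] σ)
        ∂(M.pathLaw x₀ (k + 1 + r)).map (historyCode ((k + 1 + r : ℕ) : ℤ)) =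
      ∫ l, g (historyCode 1 l) ∂(M.pathLaw x₀ (k + 1)) := by
  have hcont : Continuous fun σ => g ((shiftMap E)^[k] σ) :=
    (continuous_of_dependsOn (Set.finite_Icc m 1) hg).comp (continuous_shiftMap.iterate k)
  have hmeas : Measurable (historyCode ((k + 1 + r : ℕ) : ℤ) : List E → CodeSpace E) :=
    measurable_from_top
  have hlag : ((k + 1 + r : ℕ) : ℤ) - k = 1 + r := by
    push_cast
    ring
  rw [integral_map hmeas.aemeasurable hcont.aestronglyMeasurable,
    ← M.map_drop_pathLaw x₀ (k + 1) r, integral_map measurable_from_top.aemeasurable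
      measurable_from_top.aestronglyMeasurable]
  refine integral_congr_ae (.of_forall fun l => ?_)
  simp only [iterate_shiftMap_historyCode, hlag]
  exact hg fun j hj => (historyCode_drop hj.2 l r).symm

theorem exists_isStationaryLimit [Countable E] (hc : M.cConst ≠ ⊤) (x₀ : K) :
    ∃ Λ, M.IsStationaryLimit x₀ Λ := by
  have hcode (l : ℤ) : Measurable (historyCode l : List E → CodeSpace E) := measurable_from_top
  let Q (n : ℕ) : Measure (CodeSpace E) := (M.pathLaw x₀ n).map (historyCode (n : ℤ))
  have hQ (n : ℕ) : IsProbabilityMeasure (Q n) :=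
    Measure.isProbabilityMeasure_map (hcode n).aemeasurable
  have htight : IsTightMeasureSet (Set.range fun x : ℕ × ℕ =>
      (Q x.1).map (shiftMap E)^[x.2]) := by
    refine (isTightMeasureSet_map_historyCode hc x₀).subset (Set.range_subset_iff.2 fun x => ?_)
    refine ⟨(x.1, x.1 - x.2), ?_⟩
    rw [Measure.map_map (continuous_shiftMap.measurable.iterate x.2) (hcode _)]
    exact congrArg (Measure.map · _) (funext fun h => (iterate_shiftMap_historyCode _ _ h).symm)
  obtain ⟨Λ, hΛ, hinv, hbound⟩ :=
    exists_invariant_measure_of_isTightMeasureSet continuous_shiftMap Q htight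
  refine ⟨Λ, hΛ, hinv, fun m g B c hg hB hc => ?_⟩
  have hcont : Continuous g := continuous_of_dependsOn (Set.finite_Icc _ _) hg
  refine hbound (.ofNormedAddCommGroup g hcont B hB) (m + 1) c fun n k hmk hkn => ?_
  obtain ⟨r, rfl⟩ := Nat.exists_eq_add_of_le (Nat.succ_le_of_lt hkn)
  exact (congrArg _ (M.integral_iterate_shiftMap_historyCode x₀ hg k r)).trans_le (hc k hmk)

end StationaryLimit

section AsymptoticState

variable {M : MarkovSystem K N E}
  {j0 : N} {xp : N → K} {x₀ : K} {a : ℝ} {Λ : Measure (CodeSpace E)}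

lemma IsStationaryLimit.lintegral_le [Countable E] (hΛ : M.IsStationaryLimit x₀ Λ) {m : ℕ}
    {g : CodeSpace E → ℝ≥0∞} {c : ℝ≥0∞} (hg : DependsOn g (Set.Icc (-m : ℤ) 0))
    (hg1 : ∀ σ, g σ ≤ 1)
    (hc : ∀ n, m < n → ∫⁻ h, g (historyCode 0 h) ∂(M.pathLaw x₀ n) ≤ c) :
    ∫⁻ σ, g σ ∂Λ ≤ c := by
  have hmeas : Measurable g := (measurable_pastAlgebra_of_dependsOn hg).mono pastAlgebra_le le_rfl
  have := hΛ.isProbabilityMeasure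
  have hint : ∫⁻ σ, g σ ∂Λ = ‖∫ σ, (g σ).toReal ∂Λ‖ₑ := by
    rw [integral_toReal hmeas.aemeasurable
        (.of_forall fun σ => (hg1 σ).trans_lt ENNReal.one_lt_top),
      Real.enorm_of_nonneg ENNReal.toReal_nonneg, ENNReal.ofReal_toReal]
    exact ne_top_of_le_ne_top (measure_ne_top Λ Set.univ)
      ((lintegral_mono hg1).trans_eq lintegral_one)
  rw [hint]
  refine hΛ.enorm_integral_le m _ 1 c (fun σ τ h => ?_) (fun σ => ?_) fun n hmn => ?_
  · exact congrArg _ (hg fun j hj => h j ⟨hj.1, hj.2.trans zero_le_one⟩)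
  · rw [Real.norm_of_nonneg ENNReal.toReal_nonneg]
    exact ENNReal.toReal_le_of_le_ofReal zero_le_one (by simpa using hg1 σ)
  · calc ‖∫ l, (g (historyCode 1 l)).toReal ∂(M.pathLaw x₀ (n + 1))‖ₑ
        ≤ ∫⁻ l, g (historyCode 1 l) ∂(M.pathLaw x₀ (n + 1)) := by
          refine (enorm_integral_le_lintegral_enorm _).trans (lintegral_mono fun l => ?_)
          rw [Real.enorm_of_nonneg ENNReal.toReal_nonneg]
          exact ENNReal.ofReal_toReal_le
      _ = ∫⁻ l, g (historyCode 0 l.tail) ∂(M.pathLaw x₀ (n + 1)) :=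
          lintegral_congr fun l => hg fun j hj => (historyCode_tail hj.2 l).symm
      _ = ∫⁻ h, g (historyCode 0 h) ∂(M.pathLaw x₀ n) := by
          rw [← M.map_tail_pathLaw x₀ n, lintegral_map measurable_from_top measurable_from_top]
      _ ≤ c := hc n hmn

lemma IsStationaryLimit.ae_of_dependsOn [Countable E] (hΛ : M.IsStationaryLimit x₀ Λ) {m : ℕ}
    {P : CodeSpace E → Prop} (hP : DependsOn P (Set.Icc (-m : ℤ) 0))
    (h : ∀ n, m < n → ∀ᵐ h ∂(M.pathLaw x₀ n), P (historyCode 0 h)) : ∀ᵐ σ ∂Λ, P σ := by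
  have hmeas : MeasurableSet {σ | ¬P σ} :=
    (((measurable_pastAlgebra_of_dependsOn hP).mono pastAlgebra_le le_rfl).setOf).compl
  rw [ae_iff, ← lintegral_indicator_one hmeas]
  refine le_antisymm (hΛ.lintegral_le (m := m) (fun σ τ hστ => ?_)
    (fun σ => Set.indicator_le_self' (fun _ _ => zero_le_one) σ) fun n hmn => ?_) zero_le
  · simp only [Set.indicator, Set.mem_ofPred_eq, Pi.one_apply, hP hστ]
  · refine (lintegral_congr_ae ?_).trans_le lintegral_zero.le
    filter_upwards [h n hmn] with h hh
    simp [hh]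

lemma IsStationaryLimit.ae_mem_pathSpace [Countable E] (hΛ : M.IsStationaryLimit x₀ Λ) :
    ∀ᵐ σ ∂Λ, σ ∈ M.pathSpace := by
  let P (σ : CodeSpace E) : Prop :=
    ∃ e e', σ (-1) = some e ∧ σ 0 = some e' ∧ M.i e' = M.t e
  have hP : ∀ᵐ σ ∂Λ, P σ := by
    refine hΛ.ae_of_dependsOn (m := 1) (fun σ τ h => ?_) fun n hn => ?_
    · simp only [P, h (-1) (by simp), h 0 (by simp)]
    · obtain ⟨n, rfl⟩ := Nat.exists_eq_add_of_lt hn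
      rw [add_comm 1 n]
      refine M.ae_pathLaw_succ x₀ _ (M.ae_pathLaw_succ x₀ _ (.of_forall fun h e he e' he' => ?_))
      refine ⟨e, e', ?_, historyCode_cons_self 0 e' _, eq_of_mem_Kset he' (M.w_mapsTo e he)⟩
      exact (historyCode_cons_of_le le_rfl e' _).trans (historyCode_cons_self (-1) e h)
  filter_upwards [ae_forall_translation hΛ.map_shiftMap hP] with σ hσ n
  simpa [P] using hσ (n + 1)

lemma IsStationaryLimit.ae_mem_codeDomain [CompleteSpace K] [Countable E]
    (hΛ : M.IsStationaryLimit x₀ Λ) (hcon : M.IsContractive a) (ha1 : a < 1)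
    (hxp : ∀ j, xp j ∈ M.Kset j) (hb : M.bConst xp ≠ ⊤) :
    ∀ᵐ σ ∂Λ, σ ∈ M.codeDomain j0 xp := by
  obtain ⟨D, hDtop, hD⟩ := hcon.exists_lintegral_Lfun_pos_le hxp ha1 hb x₀
  have hdep := M.dependsOn_min_one_edist_orbit j0 xp
  have hgap (m : ℕ) : ∫⁻ σ, min 1 (edist (M.orbit j0 xp σ m) (M.orbit j0 xp σ (m + 1))) ∂Λ ≤
      ENNReal.ofReal a ^ (m + 1) * D + ENNReal.ofReal a ^ (m + 1 + 1) * D := by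
    refine hΛ.lintegral_le (hdep m) (fun σ => min_le_left _ _) fun n hmn => ?_
    calc _ ≤ ∫⁻ h, edist (M.pos x₀ h) (M.orbit j0 xp (historyCode 0 h) m) +
            edist (M.pos x₀ h) (M.orbit j0 xp (historyCode 0 h) (m + 1)) ∂(M.pathLaw x₀ n) :=
          lintegral_mono fun h => (min_le_right _ _).trans (edist_triangle_left _ _ _)
      _ ≤ _ := by
          rw [lintegral_add_left measurable_from_top]
          exact add_le_add (hcon.lintegral_edist_pos_orbit_le hxp hD (Nat.lt_of_succ_lt hmn))
            (hcon.lintegral_edist_pos_orbit_le hxp hD hmn)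
  have hsum : ∑' m, ∫⁻ σ, min 1 (edist (M.orbit j0 xp σ m) (M.orbit j0 xp σ (m + 1))) ∂Λ ≠ ⊤ := by
    refine ne_top_of_le_ne_top ?_ (ENNReal.tsum_le_tsum hgap)
    rw [ENNReal.tsum_add]
    exact ENNReal.add_ne_top.2 ⟨tsum_ofReal_pow_succ_mul_ne_top ha1 hDtop,
      ne_top_of_le_ne_top (tsum_ofReal_pow_succ_mul_ne_top ha1 hDtop)
        (ENNReal.tsum_comp_le_tsum_of_injective (add_left_injective 1)
          fun m => ENNReal.ofReal a ^ (m + 1) * D)⟩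
  filter_upwards [hΛ.ae_mem_pathSpace, ae_exists_tendsto_of_tsum_lintegral_ne_top (fun m =>
    ((measurable_pastAlgebra_of_dependsOn (hdep m)).mono pastAlgebra_le le_rfl).aemeasurable) hsum]
    with σ hpath hlim
  exact ⟨hpath, hlim⟩

lemma tendsto_p_orbit (hxp : ∀ j, xp j ∈ M.Kset j) {pbar : E → K → ℝ}
    (hpbar : M.IsUCExtensionP pbar) (e : E) {σ : CodeSpace E} (hσ : σ ∈ M.codeDomain j0 xp) :
    Tendsto (fun m => M.p e (M.orbit j0 xp σ m)) atTop
      (𝓝 ((M.Tset (M.i e)).indicator (fun σ => pbar e (M.code j0 xp σ)) σ)) := by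
  obtain ⟨e₀, -, h₀, -⟩ := hσ.1 0
  have hmem (m : ℕ) : M.orbit j0 xp σ m ∈ M.Kset (M.t e₀) := orbit_mem_Kset j0 hxp hσ.1 h₀ m
  by_cases ht : M.t e₀ = M.i e
  · rw [ht] at hmem
    have hlim : Tendsto (M.orbit j0 xp σ) atTop (𝓝 (M.code j0 xp σ)) := by
      rw [code, dif_pos hσ]
      exact hσ.2.choose_spec
    have hclosure : M.code j0 xp σ ∈ closure (M.Kset (M.i e)) :=
      mem_closure_of_tendsto hlim (.of_forall hmem)
    rw [Set.indicator_of_mem (show σ ∈ M.Tset (M.i e) from ⟨hσ.1, e₀, h₀, ht⟩)]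
    have hlim' := ((hpbar e).1 _ hclosure).tendsto.comp (tendsto_nhdsWithin_iff.2
      ⟨hlim, .of_forall fun m => subset_closure (hmem m)⟩)
    exact hlim'.congr fun m => (hpbar e).2.1 _ (hmem m)
  · have hnot : σ ∉ M.Tset (M.i e) := by
      rintro ⟨-, e₁, h₁, ht₁⟩
      obtain rfl := Option.some_injective _ (h₀.symm.trans h₁)
      exact ht ht₁
    rw [Set.indicator_of_notMem hnot]
    exact tendsto_const_nhds.congr fun m =>
      (M.p_zero_outside e _ fun h => ht (eq_of_mem_Kset (hmem m) h)).symm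

lemma IsStationaryLimit.enorm_setIntegral_sub_le [Countable E] (hΛ : M.IsStationaryLimit x₀ Λ)
    {m : ℕ} {A : Set (CodeSpace E)} (hA : DependsOn (· ∈ A) (Set.Icc (-m : ℤ) 0)) (e : E)
    {c : ℝ≥0∞} (hc : ∀ n, m < n →
      ∫⁻ h, edist (M.p e (M.pos x₀ h)) (M.p e (M.orbit j0 xp (historyCode 0 h) m))
        ∂(M.pathLaw x₀ n) ≤ c) :
    ‖∫ σ in A, ({σ | σ 1 = some e}.indicator (fun _ => 1) σ - M.p e (M.orbit j0 xp σ m)) ∂Λ‖ₑ ≤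
      c := by
  have hmeas : MeasurableSet A :=
    ((measurable_pastAlgebra_of_dependsOn hA).mono pastAlgebra_le le_rfl).setOf
  have horbit := M.dependsOn_orbit j0 xp m
  rw [← integral_indicator hmeas]
  refine hΛ.enorm_integral_le m _ 1 c (fun σ τ h => ?_) (fun σ => ?_) fun n hmn => ?_
  · have hpast : ∀ j ∈ Set.Icc (-m : ℤ) 0, σ j = τ j := fun j hj =>
      h j ⟨hj.1, hj.2.trans zero_le_one⟩
    simp only [Set.indicator, Set.mem_ofPred_eq, show (σ ∈ A) = (τ ∈ A) from hA hpast,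
      show M.orbit j0 xp σ m = M.orbit j0 xp τ m from horbit hpast, h 1 (by simp)]
  · refine (norm_indicator_le_norm_self _ σ).trans (abs_sub_le_of_nonneg_of_le ?_ ?_
      (M.p_nonneg e _) (M.p_le_one e _))
    · exact Set.indicator_nonneg (fun _ _ => zero_le_one) σ
    · exact Set.indicator_le_self' (fun _ _ => zero_le_one) σ
  · refine le_trans (congrArg enorm (integral_congr_ae (.of_forall fun l => ?_))).le
      ((M.enorm_integral_pathLaw_succ_sub_le x₀ n e (historyCode 0 ⁻¹' A)
        fun h => M.norm_p_le_one e (M.orbit j0 xp (historyCode 0 h) m)).trans (hc n hmn))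
    have hpast : ∀ j ∈ Set.Icc (-m : ℤ) 0, historyCode 1 l j = historyCode 0 l.tail j :=
      fun j hj => (historyCode_tail hj.2 l).symm
    have hAtail : (historyCode 1 l ∈ A) = (l.tail ∈ historyCode 0 ⁻¹' A) := hA hpast
    have horbit_tail : M.orbit j0 xp (historyCode 1 l) m =
      M.orbit j0 xp (historyCode 0 l.tail) m := horbit hpast
    simp only [Set.indicator, mem_image_cons_preimage_historyCode (hA.mono Set.Icc_subset_Iic_self),
      Set.mem_ofPred_eq, ← hAtail, horbit_tail]
    split_ifs <;> simp_all

lemma IsStationaryLimit.tendsto_setIntegral_sub [Countable E] (hΛ : M.IsStationaryLimit x₀ Λ)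
    (hcon : M.IsContractive a) (ha1 : a < 1) (huc : M.IsUniformlyContinuous)
    (hxp : ∀ j, xp j ∈ M.Kset j) (hb : M.bConst xp ≠ ⊤) {r : ℕ} {A : Set (CodeSpace E)}
    (hA : DependsOn (· ∈ A) (Set.Icc (-r : ℤ) 0)) (e : E) :
    Tendsto (fun m =>
      ∫ σ in A, ({σ | σ 1 = some e}.indicator (fun _ => 1) σ - M.p e (M.orbit j0 xp σ m)) ∂Λ)
      atTop (𝓝 0) := by
  obtain ⟨D, hDtop, hD⟩ := hcon.exists_lintegral_Lfun_pos_le hxp ha1 hb x₀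
  refine tendsto_zero_iff_enorm_tendsto_zero.2 (ENNReal.tendsto_nhds_zero.2 fun η hη => ?_)
  obtain ⟨ε, hε, hεη⟩ := ENNReal.lt_iff_exists_nnreal_btwn.1 hη
  obtain ⟨C, hC⟩ := hcon.exists_lintegral_edist_p_le (j0 := j0) huc hxp hD e
    (ENNReal.coe_pos.1 hε)
  have herror : Tendsto (fun m => ε + C * (ENNReal.ofReal a ^ (m + 1) * D)) atTop (𝓝 ε) := by
    simpa using (ENNReal.Tendsto.const_mul (ENNReal.tendsto_atTop_zero_of_tsum_ne_top
      (tsum_ofReal_pow_succ_mul_ne_top ha1 hDtop)) (.inr ENNReal.coe_ne_top)).const_add (ε : ℝ≥0∞)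
  filter_upwards [herror.eventually_lt_const hεη, eventually_ge_atTop r] with m hm hrm
  refine (hΛ.enorm_setIntegral_sub_le (fun σ τ h => hA fun j hj => h j ⟨?_, hj.2⟩) e (hC m)).trans
    hm.le
  have := hj.1
  omega

lemma IsStationaryLimit.condExp_ae_eq [Countable E] (hΛ : M.IsStationaryLimit x₀ Λ)
    (hcon : M.IsContractive a) (ha1 : a < 1) (huc : M.IsUniformlyContinuous)
    (hxp : ∀ j, xp j ∈ M.Kset j) (hb : M.bConst xp ≠ ⊤) {pbar : E → K → ℝ}
    (hpbar : M.IsUCExtensionP pbar) (hdomain : ∀ᵐ σ ∂Λ, σ ∈ M.codeDomain j0 xp) (e : E) :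
    Λ[{σ | σ 1 = some e}.indicator (fun _ => (1 : ℝ)) | pastAlgebra E] =ᵐ[Λ]
      (M.Tset (M.i e)).indicator fun σ => pbar e (M.code j0 xp σ) := by
  have := hΛ.isProbabilityMeasure
  have hedge : MeasurableSet {σ : CodeSpace E | σ 1 = some e} :=
    (measurable_pi_apply (1 : ℤ) : Measurable fun σ : CodeSpace E => σ 1)
      (MeasurableSpace.measurableSet_top (s := {some e}))
  refine (ae_eq_condExp_of_tendsto pastAlgebra_le rfl isPiSystem_past_cylSetL
    ((integrable_const 1).indicator hedge) (v := fun m σ => M.p e (M.orbit j0 xp σ m))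
    (fun m => measurable_pastAlgebra_of_dependsOn fun σ τ h =>
      congrArg (M.p e) (M.dependsOn_orbit j0 xp m h))
    (fun m σ => M.norm_p_le_one e _)
    (hdomain.mono fun σ hσ => tendsto_p_orbit hxp hpbar e hσ) ?_).symm
  rintro _ (rfl | ⟨es, -, rfl⟩)
  · exact hΛ.tendsto_setIntegral_sub hcon ha1 huc hxp hb (r := 0) (fun _ _ _ => rfl) e
  · refine hΛ.tendsto_setIntegral_sub hcon ha1 huc hxp hb (r := es.length)
      ((dependsOn_mem_cylSetL _ es).mono fun j hj => ⟨?_, ?_⟩) e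
    · have := hj.1
      omega
    · have := hj.2
      omega

theorem exists_isAsymptotic [CompleteSpace K] [Countable E] (hcon : M.IsContractive a)
    (ha1 : a < 1) (huc : M.IsUniformlyContinuous) (j0 : N) (hxp : ∀ j, xp j ∈ M.Kset j)
    (hb : M.bConst xp ≠ ⊤) (hc : M.cConst ≠ ⊤) {pbar : E → K → ℝ}
    (hpbar : M.IsUCExtensionP pbar) : ∃ Λ, M.IsAsymptotic j0 xp pbar Λ := by
  obtain ⟨Λ, hΛ⟩ := M.exists_isStationaryLimit hc (xp j0)
  have := hΛ.isProbabilityMeasure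
  have hdomain := hΛ.ae_mem_codeDomain (j0 := j0) hcon ha1 hxp hb
  exact ⟨Λ, hΛ.isProbabilityMeasure, hΛ.map_shiftMap,
    (measure_congr (eventuallyEq_univ.2 hdomain)).trans measure_univ,
    hΛ.condExp_ae_eq hcon ha1 huc hxp hb hpbar hdomain⟩

end AsymptoticState

end MarkovSystem

end

/-- If `M` is consistent, contractive with rate `0 < a < 1`, uniformly
continuous with `b < ∞`, and has a dominating Markov chain with `c < ∞`, then `P(M)` is
nonempty: `M` possesses an invariant Borel probability measure. -/
theorem invariant_probability_measure_exists
    (M : MarkovSystem K N E) (j0 : N) (xp : N → K) (hxp : ∀ j, xp j ∈ M.Kset j)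
    (pbar : E → K → ℝ) (hpbar : M.IsUCExtensionP pbar)
    (hcons : M.IsConsistent j0 xp pbar)
    (a : ℝ) (ha0 : 0 < a) (ha1 : a < 1) (hcon : M.IsContractive a)
    (huc : M.IsUniformlyContinuous) (hb : M.bConst xp ≠ ⊤)
    (hdom : M.HasDominatingChain) (hc : M.cConst ≠ ⊤) :
    ∃ μ : Measure K, M.IsInvariantMeasure μ := by
  obtain ⟨Λ, hΛ⟩ := MarkovSystem.exists_isAsymptotic hcon ha1 huc j0 hxp hb hc hpbar
  exact ⟨_, hcons Λ hΛ⟩
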